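/- arXiv:2510.04993 — 3 statements merged into one kernel-verified Lean document; each statement's English description precedes it below -/
import Mathlib

section
/- Let n ≥ 1 and let π be a permutation gate on n qubits that lies in 𝒞₃. Then there exist Clifford permutation gates φ₁ and φ₂ and a permutation gate μ in staircase form with μ ∈ 𝒞₃ such that π = φ₁ μ φ₂. -/
/-! Common framework: qubit gates, the Pauli group, the Clifford hierarchy,
permutation gates, Toffoli gates and staircase form, descending multiplications,
multilinear polynomial representations. -/

/-- Vectors in `𝔽₂ⁿ`, indexing computational basis states. -/
abbrev QV (n : ℕ) := Fin n → ZMod 2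

/-- `n`-qubit gates: `2ⁿ × 2ⁿ` complex matrices indexed by `𝔽₂ⁿ`. -/
abbrev QMat (n : ℕ) := Matrix (QV n) (QV n) ℂ

/-- Standard basis vector `eᵢ` of `𝔽₂ⁿ`. -/
def stdBasis (n : ℕ) (i : Fin n) : QV n := fun m => if m = i then 1 else 0

/-- The gate `X^u Z^z`, sending `|b⟩` to `(-1)^(z·b) |b+u⟩`. -/
noncomputable def XZGate (n : ℕ) (u z : QV n) : QMat n :=
  fun a b => if a = b + u then (-1 : ℂ) ^ (∑ i, (z i).val * (b i).val) else 0

/-- The Pauli group on `n` qubits: gates `c·P₁⊗⋯⊗Pₙ`, `c ∈ {±1, ±i}`,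
`Pᵢ ∈ {I,X,Y,Z}`, equivalently phases times `X^u Z^z`. -/
def PauliGroup (n : ℕ) : Set (QMat n) :=
  { P | ∃ (c : ℂ) (u z : QV n),
      (c = 1 ∨ c = -1 ∨ c = Complex.I ∨ c = -Complex.I) ∧ P = c • XZGate n u z }

/-- Level `k` of the Clifford hierarchy `𝒞ₖ` (level 1 is the Pauli group,
level 2 the Clifford group; level 0 is junk/empty). -/
def CliffordLevel (n : ℕ) : ℕ → Set (QMat n)
  | 0 => ∅
  | 1 => PauliGroup n
  | (k+2) => { U | U ∈ Matrix.unitaryGroup (QV n) ℂ ∧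
      ∀ P ∈ PauliGroup n, U * P * star U ∈ CliffordLevel n (k+1) }

/-- The permutation gate of a permutation `f` of `𝔽₂ⁿ`: sends `|v⟩` to `|f v⟩`. -/
noncomputable def permGate (n : ℕ) (f : QV n ≃ QV n) : QMat n :=
  fun a b => if a = f b then 1 else 0

/-- A diagonal gate. -/
def IsDiagonal (n : ℕ) (d : QMat n) : Prop := ∀ a b : QV n, a ≠ b → d a b = 0

/-- A gate is semi-Clifford if it equals `φ₁ d φ₂` for Clifford `φ₁, φ₂` and diagonal `d`. -/
def IsSemiClifford (n : ℕ) (U : QMat n) : Prop :=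
  ∃ φ₁ d φ₂ : QMat n, φ₁ ∈ CliffordLevel n 2 ∧ φ₂ ∈ CliffordLevel n 2 ∧
    IsDiagonal n d ∧ U = φ₁ * d * φ₂

/-- The underlying map of the Toffoli gate `TOF_{i,j,k}`: `v ↦ v + (vᵢvⱼ)·eₖ`. -/
def tofFun (n : ℕ) (i j k : Fin n) (v : QV n) : QV n :=
  fun m => if m = k then v m + v i * v j else v m

/-- A map on `𝔽₂ⁿ` is in staircase form if it is a product (applied left-to-right)
of pairwise distinct Toffoli gates `TOF_{i,j,k}` with `i<j<k` and with targets
nondecreasing in the order the gates are applied. -/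
def IsStaircase (n : ℕ) (g : QV n → QV n) : Prop :=
  ∃ L : List (Fin n × Fin n × Fin n),
    L.Nodup ∧
    (∀ t ∈ L, t.1 < t.2.1 ∧ t.2.1 < t.2.2) ∧
    List.Chain' (fun s t => s.2.2 ≤ t.2.2) L ∧
    g = fun v => L.foldl (fun w t => tofFun n t.1 t.2.1 t.2.2 w) v

/-- A descending multiplication on `𝔽₂ⁿ`: bilinear, associative, commutative,
`eᵢeᵢ = 0`, and for `i < j`, `eᵢeⱼ ∈ span{eₖ : k > j}`. -/
def IsDescendingMul (n : ℕ) (mul : QV n → QV n → QV n) : Prop :=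
  (∀ u v w : QV n, mul (u + v) w = mul u w + mul v w) ∧
  (∀ u v w : QV n, mul u (v + w) = mul u v + mul u w) ∧
  (∀ u v w : QV n, mul (mul u v) w = mul u (mul v w)) ∧
  (∀ u v : QV n, mul u v = mul v u) ∧
  (∀ i : Fin n, mul (stdBasis n i) (stdBasis n i) = 0) ∧
  (∀ i j : Fin n, i < j → ∀ m : Fin n, m ≤ j → mul (stdBasis n i) (stdBasis n j) m = 0)

/-- The product `∏_{i ∈ l} eᵢ` under a multiplication, for a list `l` (junk `0` on `[]`). -/
def dmProdList (n : ℕ) (mul : QV n → QV n → QV n) : List (Fin n) → QV n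
  | [] => 0
  | [i] => stdBasis n i
  | i :: j :: rest => mul (stdBasis n i) (dmProdList n mul (j :: rest))

/-- The product `∏_{i ∈ T} eᵢ` under a multiplication. -/
def dmProd (n : ℕ) (mul : QV n → QV n → QV n) (T : Finset (Fin n)) : QV n :=
  dmProdList n mul (T.sort (· ≤ ·))

/-- `g` is the map `∑_{i∈S} eᵢ ↦ ∑_{∅≠T⊆S} ∏_{i∈T} eᵢ` associated to a multiplication. -/
def dmPiSpec (n : ℕ) (mul : QV n → QV n → QV n) (g : QV n → QV n) : Prop :=
  ∀ S : Finset (Fin n),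
    g (∑ i ∈ S, stdBasis n i) = ∑ T ∈ S.powerset.erase ∅, dmProd n mul T

/-- The bilinear extension of `eᵢeⱼ := g(eᵢ+eⱼ) + eᵢ + eⱼ`. -/
def inducedMul (n : ℕ) (g : QV n → QV n) (u v : QV n) : QV n :=
  ∑ i : Fin n, ∑ j : Fin n,
    (u i * v j) • (g (stdBasis n i + stdBasis n j) + stdBasis n i + stdBasis n j)

/-- Coefficient of the monomial `∏_{i∈T} aᵢ` in the unique multilinear polynomial
over `𝔽₂` representing `g : 𝔽₂ⁿ → 𝔽₂` (Möbius inversion over `𝔽₂`). -/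
def mlCoeff (n : ℕ) (g : QV n → ZMod 2) (T : Finset (Fin n)) : ZMod 2 :=
  ∑ R ∈ T.powerset, g (∑ i ∈ R, stdBasis n i)

/-- Strictly lower triangular matrix. -/
def StrictLowerTri (n : ℕ) (A : Matrix (Fin n) (Fin n) (ZMod 2)) : Prop :=
  ∀ p q : Fin n, p ≤ q → A p q = 0

/-- Multiplication of basis vectors for the gate `U_k`: the basis of `𝔽₂^(2^k-1)` is
indexed by nonempty subsets `S ⊆ [k]`, encoded as indices `a` via the binary digits of
`a+1`; `e_S e_T = e_{S∪T}` if `S ∩ T = ∅` and `e_S e_T = 0` otherwise. -/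
def ukBasisMul (k : ℕ) (a b : Fin (2 ^ k - 1)) : QV (2 ^ k - 1) :=
  if (a.val + 1) &&& (b.val + 1) = 0 then
    (if h : a.val + b.val + 1 < 2 ^ k - 1 then stdBasis (2 ^ k - 1) ⟨a.val + b.val + 1, h⟩
     else 0)
  else 0

/-- The descending multiplication defining `U_k`, extended bilinearly. -/
def ukMul (k : ℕ) (u v : QV (2 ^ k - 1)) : QV (2 ^ k - 1) :=
  ∑ a : Fin (2 ^ k - 1), ∑ b : Fin (2 ^ k - 1), (u a * v b) • ukBasisMul k a b

/-! ### Signs and matrix entries -/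

/-- The sign character of `𝔽₂`. -/
noncomputable def sgn (t : ZMod 2) : ℂ := (-1 : ℂ) ^ t.val

lemma sgn_natCast (m : ℕ) : sgn (m : ZMod 2) = (-1 : ℂ) ^ m := by
  unfold sgn
  rw [ZMod.val_natCast, ← neg_one_pow_eq_pow_mod_two]

lemma sgn_add (s t : ZMod 2) : sgn (s + t) = sgn s * sgn t := by
  unfold sgn
  rw [ZMod.val_add, ← neg_one_pow_eq_pow_mod_two, pow_add]

lemma zmod2_cases (s : ZMod 2) : s = 0 ∨ s = 1 := by
  revert s; decide

lemma sgn_zero : sgn 0 = 1 := by simp [sgn]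

lemma sgn_one : sgn 1 = -1 := by simp [sgn, ZMod.val_one]

lemma sgn_inj {s t : ZMod 2} (h : sgn s = sgn t) : s = t := by
  rcases zmod2_cases s with rfl | rfl <;> rcases zmod2_cases t with rfl | rfl <;>
    simp only [sgn_zero, sgn_one] at h ⊢
  · norm_num at h
  · norm_num at h

lemma sgn_ne_zero (s : ZMod 2) : sgn s ≠ 0 := by
  unfold sgn; exact pow_ne_zero _ (by norm_num)

lemma star_sgn (s : ZMod 2) : star (sgn s) = sgn s := by
  unfold sgn; simp

lemma XZ_apply (n : ℕ) (u z a b : QV n) :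
    XZGate n u z a b = if a = b + u then sgn (z ⬝ᵥ b) else 0 := by
  unfold XZGate
  rw [← sgn_natCast]
  congr 2
  push_cast
  simp [dotProduct]

lemma star_perm (n : ℕ) (f : QV n ≃ QV n) : star (permGate n f) = permGate n f.symm := by
  ext a b
  simp only [Matrix.star_apply, permGate]
  by_cases h : b = f a
  · subst h; simp
  · have : a ≠ f.symm b := fun e => h (by rw [e]; simp)
    simp [h, this]

lemma perm_mul_apply (n : ℕ) (f : QV n ≃ QV n) (M : QMat n) (a b : QV n) :
    (permGate n f * M) a b = M (f.symm a) b := by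
  rw [Matrix.mul_apply, Finset.sum_eq_single (f.symm a)]
  · simp [permGate]
  · intro c _ hc
    have : a ≠ f c := fun e => hc (by rw [e]; simp)
    simp [permGate, this]
  · simp

lemma mul_perm_apply (n : ℕ) (f : QV n ≃ QV n) (M : QMat n) (a b : QV n) :
    (M * permGate n f) a b = M a (f b) := by
  rw [Matrix.mul_apply, Finset.sum_eq_single (f b)]
  · simp [permGate]
  · intro c _ hc
    simp [permGate, hc]
  · simp

lemma conj_perm_apply (n : ℕ) (f : QV n ≃ QV n) (M : QMat n) (a b : QV n) :
    (permGate n f * M * star (permGate n f)) a b = M (f.symm a) (f.symm b) := by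
  rw [star_perm, mul_perm_apply, perm_mul_apply]

lemma perm_unitary (n : ℕ) (f : QV n ≃ QV n) :
    permGate n f ∈ Matrix.unitaryGroup (QV n) ℂ := by
  rw [Matrix.mem_unitaryGroup_iff, star_perm]
  ext a b
  rw [perm_mul_apply, permGate, Matrix.one_apply]
  simp

lemma perm_mul_perm (n : ℕ) (f g : QV n ≃ QV n) :
    permGate n f * permGate n g = permGate n (g.trans f) := by
  ext a b
  rw [mul_perm_apply]; rfl

/-! ### Closure properties of the hierarchy -/

lemma C2_mul (n : ℕ) {U V : QMat n} (hU : U ∈ CliffordLevel n 2) (hV : V ∈ CliffordLevel n 2) :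
    U * V ∈ CliffordLevel n 2 := by
  refine ⟨mul_mem hU.1 hV.1, fun P hP => ?_⟩
  have := hU.2 _ (hV.2 P hP)
  simpa only [star_mul, Matrix.mul_assoc] using this

lemma C3_mul_C2 (n : ℕ) {U V : QMat n} (hU : U ∈ CliffordLevel n 3)
    (hV : V ∈ CliffordLevel n 2) : U * V ∈ CliffordLevel n 3 := by
  refine ⟨mul_mem hU.1 hV.1, fun P hP => ?_⟩
  have := hU.2 _ (hV.2 P hP)
  simpa only [star_mul, Matrix.mul_assoc] using this

lemma C2_mul_C3 (n : ℕ) {U V : QMat n} (hU : U ∈ CliffordLevel n 2)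
    (hU' : star U ∈ CliffordLevel n 2)
    (hV : V ∈ CliffordLevel n 3) : U * V ∈ CliffordLevel n 3 := by
  refine ⟨mul_mem hU.1 hV.1, fun P hP => ?_⟩
  have := C2_mul n (C2_mul n hU (hV.2 P hP)) hU'
  simpa only [star_mul, Matrix.mul_assoc] using this

/-- Affine maps of `𝔽₂ⁿ`. -/
def IsAff (n : ℕ) (g : QV n → QV n) : Prop := ∀ x w, g (x + w) = g x + g w + g 0

lemma qv_self (n : ℕ) (x : QV n) : x + x = 0 := by
  ext i; exact CharTwo.add_self_eq_zero (x i)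

lemma IsAff.symm {n : ℕ} {g : QV n ≃ QV n} (h : IsAff n g) : IsAff n g.symm := by
  intro x w
  apply g.injective
  rw [h, h, Equiv.apply_symm_apply, Equiv.apply_symm_apply, Equiv.apply_symm_apply,
    Equiv.apply_symm_apply]
  have := qv_self n (g 0)
  linear_combination -this

/-- An additive functional is a sum over coordinates. -/
lemma additive_expand (n : ℕ) (h : QV n → ZMod 2) (hh : ∀ x y, h (x + y) = h x + h y) (x : QV n) :
    h x = ∑ i, x i * h (stdBasis n i) := by
  let H : QV n →ₗ[ZMod 2] ZMod 2 := (AddMonoidHom.mk' h hh).toZModLinearMap 2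
  have hx : x = ∑ i, x i • stdBasis n i := by
    ext m
    simp [stdBasis, Finset.sum_apply]
  have : H x = ∑ i, x i • H (stdBasis n i) := by
    conv_lhs => rw [hx]
    simp only [map_sum, map_smul]
  simpa [H] using this

lemma aff_mem_C2 (n : ℕ) (g : QV n ≃ QV n) (h : IsAff n g) : permGate n g ∈ CliffordLevel n 2 := by
  refine ⟨perm_unitary n g, ?_⟩
  rintro P ⟨c, u, z, hc, rfl⟩
  have hs := h.symm
  let q : QV n → ZMod 2 := fun b => z ⬝ᵥ g.symm b + z ⬝ᵥ g.symm 0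
  have hq : ∀ x y, q (x + y) = q x + q y := by
    intro x y
    simp only [q, hs x y, dotProduct_add]
    ring
  refine ⟨c * sgn (z ⬝ᵥ g.symm 0), g u + g 0, fun i => q (stdBasis n i), ?_, ?_⟩
  · rcases zmod2_cases (z ⬝ᵥ g.symm 0) with e | e <;> rw [e] <;>
      simp only [sgn_zero, sgn_one, mul_one, mul_neg] <;>
      rcases hc with rfl | rfl | rfl | rfl <;> simp
  · ext a b
    rw [conj_perm_apply, Matrix.smul_apply, Matrix.smul_apply, XZ_apply, XZ_apply]
    have e1 : (fun i => q (stdBasis n i)) ⬝ᵥ b = q b := by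
      rw [additive_expand n q hq b, dotProduct]
      simp only [mul_comm]
    have e2 : (g.symm a = g.symm b + u) ↔ (a = b + (g u + g 0)) := by
      rw [Equiv.symm_apply_eq, h, Equiv.apply_symm_apply, add_assoc]
    rw [e1]
    by_cases h1 : a = b + (g u + g 0)
    · rw [if_pos (e2.2 h1), if_pos h1]
      simp only [smul_eq_mul, mul_assoc, ← sgn_add]
      congr 2
      simp only [q]
      have := CharTwo.add_self_eq_zero (z ⬝ᵥ g.symm 0)
      linear_combination -this
    · rw [if_neg (fun e => h1 (e2.1 e)), if_neg h1]
      simp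

lemma xz_mem (n : ℕ) (u z : QV n) : XZGate n u z ∈ PauliGroup n :=
  ⟨1, u, z, Or.inl rfl, by simp⟩

lemma C2_aff (n : ℕ) (g : QV n ≃ QV n) (h : permGate n g ∈ CliffordLevel n 2) : IsAff n g := by
  have key : ∀ w, ∃ u, ∀ x, g (x + w) = g x + u := by
    intro w
    obtain ⟨c, u, z, hc, e⟩ := h.2 _ (xz_mem n w 0)
    refine ⟨u, fun x => ?_⟩
    have := congrFun (congrFun e (g (x + w))) (g x)
    rw [conj_perm_apply, Matrix.smul_apply, XZ_apply, XZ_apply] at this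
    by_contra hne
    simp [hne, sgn_zero] at this
  intro x w
  obtain ⟨u, hu⟩ := key w
  have h0 := hu 0
  rw [zero_add] at h0
  rw [hu, h0]
  have := qv_self n (g 0)
  linear_combination -this

lemma C3_A (n : ℕ) (f : QV n ≃ QV n) (h : permGate n f ∈ CliffordLevel n 3) (u : QV n) :
    IsAff n (fun x => f (f.symm x + u)) := by
  have h1 := h.2 _ (xz_mem n u 0)
  let g : QV n ≃ QV n := (f.symm.trans (Equiv.addRight u)).trans f
  have : permGate n f * XZGate n u 0 * star (permGate n f) = permGate n g := by
    ext a b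
    rw [conj_perm_apply, XZ_apply]
    simp only [permGate, g, Equiv.trans_apply, Equiv.coe_addRight, zero_dotProduct, sgn_zero,
      Equiv.symm_apply_eq]
    congr
  rw [this] at h1
  exact C2_aff n g h1

/-- The polarization of a map. -/
def pol (n : ℕ) (p : QV n → QV n) (x y : QV n) : QV n := p (x + y) + p x + p y + p 0

lemma C3_Q (n : ℕ) (f : QV n ≃ QV n) (h : permGate n f ∈ CliffordLevel n 3) (x y w : QV n) :
    pol n f.symm (x + y) w = pol n f.symm x w + pol n f.symm y w := by
  ext m
  have h1 := h.2 _ (xz_mem n 0 (stdBasis n m))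
  set D := permGate n f * XZGate n 0 (stdBasis n m) * star (permGate n f) with hD
  have hDa : ∀ a b, D a b = if a = b then sgn (f.symm b m) else 0 := by
    intro a b
    rw [hD, conj_perm_apply, XZ_apply]
    simp [stdBasis, dotProduct]
  have hd : D = Matrix.diagonal (fun b => sgn (f.symm b m)) := by
    ext a b
    rw [hDa, Matrix.diagonal_apply]
    split_ifs with e
    · rw [e]
    · rfl
  have hs : star D = D := by
    rw [hd, Matrix.star_eq_conjTranspose, Matrix.diagonal_conjTranspose]
    congr 1
    ext b
    exact star_sgn _
  obtain ⟨c, u, z, hc, e⟩ := h1.2 _ (xz_mem n w 0)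
  have key : ∀ b, sgn (f.symm (b + w) m + f.symm b m) = c * sgn (z ⬝ᵥ b) := by
    intro b
    have e1 := congrFun (congrFun e (b + w)) b
    rw [hs, hd, Matrix.mul_diagonal, Matrix.diagonal_mul, Matrix.smul_apply, XZ_apply, XZ_apply,
      if_pos rfl, zero_dotProduct, sgn_zero, mul_one, ← sgn_add] at e1
    rw [e1]
    split_ifs with hh
    · rfl
    · rw [if_neg hh] at e1
      simp at e1
      exact absurd e1 (sgn_ne_zero _)
  have key2 : ∀ b, pol n f.symm b w m = z ⬝ᵥ b := by
    intro b
    apply sgn_inj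
    have k0 := key 0
    rw [dotProduct_zero, sgn_zero, mul_one, zero_add] at k0
    have kb := key b
    rw [← k0, ← sgn_add] at kb
    have kb := sgn_inj kb
    congr 1
    simp only [pol, Pi.add_apply]
    have t1 := CharTwo.add_self_eq_zero (f.symm w m + f.symm 0 m)
    linear_combination kb + t1
  rw [Pi.add_apply, key2, key2, key2, dotProduct_add]

/-! ### The multiplication attached to a gate -/

/-- The multiplication `x * y` with `1 + f(u + w) = (1 + f u)(1 + f w)`. -/
def gmul (n : ℕ) (f : QV n ≃ QV n) (x y : QV n) : QV n := f (f.symm x + f.symm y) + x + y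

/-- Algebraic laws of the multiplication. -/
structure GoodMul (n : ℕ) (mul : QV n → QV n → QV n) : Prop where
  comm : ∀ x y, mul x y = mul y x
  add_left : ∀ x y z, mul (x + y) z = mul x z + mul y z
  assoc : ∀ x y z, mul (mul x y) z = mul x (mul y z)
  sq : ∀ x, mul x x = 0

lemma gmul_comm (n : ℕ) (f : QV n ≃ QV n) (x y : QV n) : gmul n f x y = gmul n f y x := by
  unfold gmul
  rw [add_comm (f.symm x)]
  abel

lemma gmul_circ (n : ℕ) (f : QV n ≃ QV n) (x y : QV n) :
    f (f.symm x + f.symm y) = gmul n f x y + x + y := by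
  unfold gmul
  linear_combination -qv_self n x - qv_self n y

lemma gmul_good (n : ℕ) (f : QV n ≃ QV n) (h0 : f 0 = 0)
    (hA : ∀ u, IsAff n (fun x => f (f.symm x + u))) : GoodMul n (gmul n f) := by
  have h0' : f.symm 0 = 0 := by rw [Equiv.symm_apply_eq, h0]
  have hadd : ∀ x y z, gmul n f (x + y) z = gmul n f x z + gmul n f y z := by
    intro x y z
    have := hA (f.symm z) x y
    simp only [h0', zero_add, Equiv.apply_symm_apply] at this
    unfold gmul
    rw [this]
    abel
  have tri : ∀ x y z, gmul n f (gmul n f x y) z = f (f.symm x + f.symm y + f.symm z)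
      + f (f.symm x + f.symm y) + f (f.symm x + f.symm z) + f (f.symm y + f.symm z)
      + x + y + z := by
    intro x y z
    have e : gmul n f x y = f (f.symm x + f.symm y) + x + y := rfl
    rw [e, hadd, hadd]
    simp only [gmul, Equiv.symm_apply_apply]
    linear_combination qv_self n z
  refine ⟨gmul_comm n f, hadd, ?_, ?_⟩
  · intro x y z
    rw [gmul_comm n f x (gmul n f y z), tri, tri]
    rw [show f.symm y + f.symm z + f.symm x = f.symm x + f.symm y + f.symm z by abel,
      add_comm (f.symm y) (f.symm x), add_comm (f.symm z) (f.symm x)]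
    abel
  · intro x
    unfold gmul
    rw [qv_self, h0, zero_add, qv_self]

namespace GoodMul

variable {n : ℕ} {mul : QV n → QV n → QV n}

lemma add_right (h : GoodMul n mul) (x y z : QV n) : mul x (y + z) = mul x y + mul x z := by
  rw [h.comm, h.add_left, h.comm y, h.comm z]

lemma zero_left (h : GoodMul n mul) (x : QV n) : mul 0 x = 0 := by
  have := h.add_left 0 0 x
  rw [add_zero] at this
  rw [this, qv_self]

lemma zero_right (h : GoodMul n mul) (x : QV n) : mul x 0 = 0 := by
  rw [h.comm, h.zero_left]

lemma smul_left (h : GoodMul n mul) (c : ZMod 2) (x y : QV n) : mul (c • x) y = c • mul x y := by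
  rcases zmod2_cases c with rfl | rfl
  · simp [h.zero_left]
  · simp

lemma smul_right (h : GoodMul n mul) (c : ZMod 2) (x y : QV n) : mul x (c • y) = c • mul x y := by
  rw [h.comm, h.smul_left, h.comm]

lemma sqmul (h : GoodMul n mul) (x y : QV n) : mul x (mul x y) = 0 := by
  rw [← h.assoc, h.sq, h.zero_left]

/-- `{x : x * v ∈ W}`. -/
def ann (h : GoodMul n mul) (W : Submodule (ZMod 2) (QV n)) (v : QV n) :
    Submodule (ZMod 2) (QV n) where
  carrier := {x | mul x v ∈ W}
  add_mem' := by
    intro a b ha hb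
    simp only [Set.mem_ofPred_eq] at *
    rw [h.add_left]; exact W.add_mem ha hb
  zero_mem' := by
    simp only [Set.mem_ofPred_eq, h.zero_left]; exact W.zero_mem
  smul_mem' := by
    intro c x hx
    simp only [Set.mem_ofPred_eq] at *
    rw [h.smul_left]; exact W.smul_mem _ hx

/-- Modulo a proper ideal there is a nonzero vector killed by everything. -/
lemma exists_socle (h : GoodMul n mul) (W : Submodule (ZMod 2) (QV n))
    (hW : ∀ x, ∀ w ∈ W, mul x w ∈ W) (hne : W ≠ ⊤) : ∃ v, v ∉ W ∧ ∀ x, mul x v ∈ W := by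
  obtain ⟨v0, hv0⟩ : ∃ v, v ∉ W := by
    by_contra! hc
    exact hne (eq_top_iff.2 fun x _ => hc x)
  let s : Set (Submodule (ZMod 2) (QV n)) := (fun v => h.ann W v) '' {v | v ∉ W}
  have hs : s.Nonempty := ⟨_, v0, hv0, rfl⟩
  obtain ⟨M, ⟨v, hv, rfl⟩, hmax⟩ := wellFounded_gt.has_min s hs
  refine ⟨v, hv, fun x => ?_⟩
  by_contra hx
  refine hmax (h.ann W (mul x v)) ⟨_, hx, rfl⟩ ?_
  refine lt_of_le_of_ne ?_ ?_
  · intro y hy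
    change mul y (mul x v) ∈ W
    rw [← h.assoc, h.comm y x, h.assoc]
    exact hW _ _ hy
  · intro e
    have hx' : x ∈ h.ann W (mul x v) := by
      change mul x (mul x v) ∈ W
      rw [h.sqmul]; exact W.zero_mem
    have : x ∈ h.ann W v := by
      have e' : h.ann W v = h.ann W (mul x v) := e
      rw [e']; exact hx'
    exact hx this

lemma exists_flag (h : GoodMul n mul) (m : ℕ) (hm : m ≤ n) :
    ∃ c : Fin m → QV n, LinearIndependent (ZMod 2) c ∧
      ∀ k x, mul x (c k) ∈ Submodule.span (ZMod 2) (c '' {j | k < j}) := by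
  induction m with
  | zero => exact ⟨Fin.elim0, linearIndependent_empty_type, fun k => k.elim0⟩
  | succ m ih =>
    obtain ⟨c, hc, hd⟩ := ih (by omega)
    have hid : ∀ x, ∀ w ∈ Submodule.span (ZMod 2) (Set.range c),
        mul x w ∈ Submodule.span (ZMod 2) (Set.range c) := by
      intro x w hw
      induction hw using Submodule.span_induction with
      | mem w hw =>
        obtain ⟨k, rfl⟩ := hw
        exact Submodule.span_mono (Set.image_subset_range _ _) (hd k x)
      | zero => rw [h.zero_right]; exact Submodule.zero_mem _
      | add a b _ _ ha hb => rw [h.add_right]; exact Submodule.add_mem _ ha hb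
      | smul a b _ hb => rw [h.smul_right]; exact Submodule.smul_mem _ _ hb
    have hne : Submodule.span (ZMod 2) (Set.range c) ≠ ⊤ := by
      intro e
      have h1 := finrank_span_eq_card hc
      rw [e, finrank_top] at h1
      simp at h1
      omega
    obtain ⟨v, hv, hk⟩ := h.exists_socle _ hid hne
    refine ⟨Fin.cons v c, linearIndependent_finCons.2 ⟨hc, hv⟩, ?_⟩
    intro k x
    refine Fin.cases ?_ (fun k => ?_) k
    · rw [Fin.cons_zero]
      refine Submodule.span_mono ?_ (hk x)
      rintro _ ⟨j, rfl⟩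
      exact ⟨j.succ, by simp, by simp⟩
    · rw [Fin.cons_succ]
      refine Submodule.span_mono ?_ (hd k x)
      rintro _ ⟨j, hj, rfl⟩
      exact ⟨j.succ, by simpa using hj, by simp⟩

/-- A basis change making the multiplication descending. -/
lemma exists_basis (h : GoodMul n mul) : ∃ Φ : QV n ≃ₗ[ZMod 2] QV n,
    ∀ x (j m : Fin n), m ≤ j → Φ.symm (mul x (Φ (stdBasis n j))) m = 0 := by
  obtain ⟨c, hc, hd⟩ := h.exists_flag n le_rfl
  let b : Module.Basis (Fin n) (ZMod 2) (QV n) :=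
    basisOfLinearIndependentOfCardEqFinrank' c hc (by simp)
  have hb : ∀ i, b i = c i := fun i => by simp [b]
  refine ⟨b.equivFun.symm, fun x j m hmj => ?_⟩
  have e : b.equivFun.symm (stdBasis n j) = c j := by
    rw [Module.Basis.equivFun_symm_apply]
    simp [stdBasis, hb]
  rw [e]
  have hm := hd j x
  have hcb : c = b := funext fun i => (hb i).symm
  rw [hcb, Module.Basis.mem_span_image] at hm
  rw [LinearEquiv.symm_symm, Module.Basis.equivFun_apply]
  by_contra hne
  have : m ∈ (b.repr (mul x (b j))).support := by
    rw [Finsupp.mem_support_iff]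
    rwa [hcb] at hne
  have := hm this
  simp only [Set.mem_ofPred_eq] at this
  exact absurd hmj (not_le.2 this)

end GoodMul

/-! ### Descending multiplications -/

/-- Vectors supported on coordinates `≥ k`. -/
def tailV (n k : ℕ) (x : QV n) : Prop := ∀ m : Fin n, m.val < k → x m = 0

/-- `x * e_j` is supported on coordinates `> j`. -/
def Desc (n : ℕ) (mul : QV n → QV n → QV n) : Prop :=
  ∀ x (j m : Fin n), m ≤ j → mul x (stdBasis n j) m = 0

lemma tailV_add {n k : ℕ} {x y : QV n} (hx : tailV n k x) (hy : tailV n k y) :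
    tailV n k (x + y) := fun m hm => by rw [Pi.add_apply, hx m hm, hy m hm, add_zero]

lemma tailV_mul {n k : ℕ} {mul : QV n → QV n → QV n} (h : GoodMul n mul) (hd : Desc n mul)
    (y : QV n) {z : QV n} (hz : tailV n k z) : tailV n k (mul y z) := by
  intro m hm
  rw [additive_expand n (fun z => mul y z m)
    (fun a b => by simp only [h.add_right, Pi.add_apply]) z]
  refine Finset.sum_eq_zero fun j _ => ?_
  by_cases hj : j.val < k
  · rw [hz j hj, zero_mul]
  · rw [hd y j m (by rw [Fin.le_def]; omega), mul_zero]

lemma symm_shift (n : ℕ) (g : QV n ≃ QV n) (h : GoodMul n (gmul n g)) (a z : QV n) :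
    g.symm (a + z) = g.symm a + g.symm (z + gmul n g a z) := by
  rw [Equiv.symm_apply_eq, gmul_circ, h.add_right, h.sqmul]
  linear_combination -qv_self n (gmul n g a z)

/-- Downward induction principle along the flag. -/
lemma tail_induct (n : ℕ) (g : QV n ≃ QV n) (h : GoodMul n (gmul n g)) (hd : Desc n (gmul n g))
    (R : ℕ → QV n → Prop) (hmono : ∀ k x, R (k + 1) x → R k x) (hR0 : R n (g.symm 0))
    (hstep : ∀ (k : Fin n) x, R (k.val + 1) x → R k.val (g.symm (stdBasis n k) + x))
    (k : ℕ) (hk : k ≤ n) : ∀ x, tailV n k x → R k (g.symm x) := by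
  induction hk using Nat.decreasingInduction with
  | self =>
    intro x hx
    have : x = 0 := by ext m; exact hx m m.2
    rw [this]; exact hR0
  | of_succ k hk ih =>
    intro x hx
    rcases zmod2_cases (x ⟨k, hk⟩) with e | e
    · apply hmono
      apply ih
      intro m hm
      rcases Nat.lt_succ_iff_lt_or_eq.1 hm with h1 | h1
      · exact hx m h1
      · have : m = ⟨k, hk⟩ := Fin.ext h1
        rw [this, e]
    · set ek := stdBasis n ⟨k, hk⟩ with hek
      have hz : tailV n (k + 1) (ek + x) := by
        intro m hm
        rcases Nat.lt_succ_iff_lt_or_eq.1 hm with h1 | h1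
        · have : m ≠ ⟨k, hk⟩ := fun e => by rw [e] at h1; simp at h1
          simp [hek, stdBasis, this, hx m h1]
        · have : m = ⟨k, hk⟩ := Fin.ext h1
          rw [this, Pi.add_apply, e]
          simp [hek, stdBasis]
          decide
      have hx2 : x = ek + (ek + x) := by rw [← add_assoc, qv_self, zero_add]
      rw [hx2, symm_shift n g h]
      exact hstep ⟨k, hk⟩ _ (ih _ (tailV_add hz (tailV_mul h hd _ hz)))

/-! ### Quadratic maps -/

lemma quad_expand (n : ℕ) (p : QV n → QV n) (p0 : p 0 = 0)
    (pe : ∀ i, p (stdBasis n i) = stdBasis n i)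
    (hQ : ∀ x y w, pol n p (x + y) w = pol n p x w + pol n p y w) (x : QV n) (m : Fin n) :
    p x m = x m + ∑ i, ∑ j, if i < j then
      x i * x j * pol n p (stdBasis n i) (stdBasis n j) m else 0 := by
  have hcomm : ∀ x y, pol n p x y = pol n p y x := by
    intro x y
    unfold pol
    rw [add_comm x y]
    abel
  have hself : ∀ x, pol n p x x = 0 := by
    intro x
    unfold pol
    rw [qv_self, p0, zero_add, add_zero, qv_self]
  have hbil : ∀ x y, pol n p x y m =
      ∑ i, ∑ j, x i * y j * pol n p (stdBasis n i) (stdBasis n j) m := by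
    intro x y
    rw [additive_expand n (fun x => pol n p x y m) (fun a b => by simp only [hQ, Pi.add_apply]) x]
    refine Finset.sum_congr rfl fun i _ => ?_
    rw [hcomm, additive_expand n (fun y => pol n p y (stdBasis n i) m)
      (fun a b => by simp only [hQ, Pi.add_apply]) y, Finset.mul_sum]
    refine Finset.sum_congr rfl fun j _ => ?_
    rw [hcomm, mul_assoc]
  let q : QV n → ZMod 2 := fun x => ∑ i, ∑ j, if i < j then
      x i * x j * pol n p (stdBasis n i) (stdBasis n j) m else 0
  have hq : ∀ x y, q (x + y) = q x + q y + pol n p x y m := by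
    intro x y
    have h1 : pol n p x y m =
        (∑ i, ∑ j, if i < j then
          x i * y j * pol n p (stdBasis n i) (stdBasis n j) m else 0) +
        (∑ i, ∑ j, if i < j then
          x j * y i * pol n p (stdBasis n i) (stdBasis n j) m else 0) := by
      rw [hbil, Finset.sum_comm (f := fun i j => if i < j then
          x j * y i * pol n p (stdBasis n i) (stdBasis n j) m else 0)]
      simp only [← Finset.sum_add_distrib]
      refine Finset.sum_congr rfl fun i _ => Finset.sum_congr rfl fun j _ => ?_
      rcases lt_trichotomy i j with h | h | h
      · simp [h, not_lt.2 h.le]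
      · subst h; simp [hself]
      · simp only [h, not_lt.2 h.le, if_true, if_false, zero_add]
        rw [hcomm]
    rw [h1]
    simp only [q, ← Finset.sum_add_distrib]
    refine Finset.sum_congr rfl fun i _ => Finset.sum_congr rfl fun j _ => ?_
    split_ifs
    · simp only [Pi.add_apply]; ring
    · simp
  have hqe : ∀ k, q (stdBasis n k) = 0 := by
    intro k
    refine Finset.sum_eq_zero fun i _ => Finset.sum_eq_zero fun j _ => ?_
    split_ifs with h
    · by_cases hi : i = k
      · have : j ≠ k := fun e => by rw [hi, e] at h; exact lt_irrefl _ h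
        simp [stdBasis, this]
      · simp [stdBasis, hi]
    · rfl
  have hD := additive_expand n (fun x => p x m + x m + q x) (by
    intro x y
    simp only [hq]
    simp only [pol, p0, Pi.add_apply, Pi.zero_apply]
    linear_combination CharTwo.add_self_eq_zero (p (x + y) m)) x
  have hz : ∀ i, p (stdBasis n i) m + stdBasis n i m + q (stdBasis n i) = 0 := by
    intro i
    rw [pe, hqe, add_zero]
    exact CharTwo.add_self_eq_zero _
  simp only [hz, mul_zero, Finset.sum_const_zero] at hD
  change p x m = x m + q x
  linear_combination hD - CharTwo.add_self_eq_zero (x m) - CharTwo.add_self_eq_zero (q x)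

/-! ### Staircase products -/

lemma stair_eval (n : ℕ) (L : List (Fin n × Fin n × Fin n))
    (hlt : ∀ t ∈ L, t.1 < t.2.1 ∧ t.2.1 < t.2.2)
    (hs : L.Pairwise (fun s t => s.2.2 ≤ t.2.2)) (v y : QV n)
    (hy : y = L.foldl (fun w t => tofFun n t.1 t.2.1 t.2.2 w) v) (m : Fin n) :
    y m = v m + (L.map (fun t => if t.2.2 = m then y t.1 * y t.2.1 else 0)).sum := by
  induction L using List.reverseRecOn generalizing y m with
  | nil => subst hy; simp
  | append_singleton L t ih =>
    rw [List.pairwise_append] at hs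
    obtain ⟨hs1, -, hs2⟩ := hs
    have ih := ih (fun t ht => hlt t (by simp [ht])) hs1 _ rfl
    rw [List.foldl_append] at hy
    set y' := L.foldl (fun w t => tofFun n t.1 t.2.1 t.2.2 w) v with hy'
    simp only [List.foldl_cons, List.foldl_nil] at hy
    have hyl : ∀ i, i ≠ t.2.2 → y i = y' i := by
      intro i hi
      rw [hy]; simp [tofFun, hi]
    obtain ⟨ht1, ht2⟩ := hlt t (by simp)
    rw [List.map_append, List.sum_append]
    have e : L.map (fun t => if t.2.2 = m then y t.1 * y t.2.1 else 0) =
        L.map (fun t => if t.2.2 = m then y' t.1 * y' t.2.1 else 0) := by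
      refine List.map_congr_left fun s hsL => ?_
      obtain ⟨h1, h2⟩ := hlt s (by simp [hsL])
      have h3 := hs2 s hsL t (by simp)
      rw [hyl s.1 (ne_of_lt ((h1.trans h2).trans_le h3)), hyl s.2.1 (ne_of_lt (h2.trans_le h3))]
    rw [e, ← add_assoc, ← ih m]
    simp only [List.map_cons, List.map_nil, List.sum_cons, List.sum_nil, add_zero]
    rw [hyl _ (ne_of_lt (ht1.trans ht2)), hyl _ (ne_of_lt ht2)]
    by_cases hm : m = t.2.2
    · rw [if_pos hm.symm, hy]; simp [tofFun, hm]
    · rw [if_neg (Ne.symm hm), hyl m hm, add_zero]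

lemma stair_of_inv (n : ℕ) (μ : QV n ≃ QV n) (c : Fin n → Fin n → Fin n → ZMod 2)
    (hc : ∀ i j m, i < j → m ≤ j → c i j m = 0)
    (hμ : ∀ x m, μ.symm x m = x m + ∑ i, ∑ j, if i < j then x i * x j * c i j m else 0) :
    IsStaircase n μ := by
  classical
  let T : Finset (Fin n × Fin n × Fin n) :=
    Finset.univ.filter (fun t => t.1 < t.2.1 ∧ c t.1 t.2.1 t.2.2 = 1)
  let le : (Fin n × Fin n × Fin n) → (Fin n × Fin n × Fin n) → Bool :=
    fun s t => decide (s.2.2 ≤ t.2.2)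
  let L := T.toList.mergeSort le
  have hperm : L.Perm T.toList := List.mergeSort_perm _ _
  have hsort : L.Pairwise (fun s t => s.2.2 ≤ t.2.2) := by
    have := List.pairwise_mergeSort (le := le)
      (fun a b c h1 h2 => by simp only [le, decide_eq_true_eq] at *; exact h1.trans h2)
      (fun a b => by simp only [le, Bool.or_eq_true, decide_eq_true_eq]; exact le_total _ _)
      T.toList
    refine this.imp ?_
    intro a b hab
    simpa [le] using hab
  have hlt : ∀ t ∈ L, t.1 < t.2.1 ∧ t.2.1 < t.2.2 := by
    intro t ht
    have : t ∈ T := by rw [hperm.mem_iff] at ht; simpa using ht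
    simp only [T, Finset.mem_filter, Finset.mem_univ, true_and] at this
    refine ⟨this.1, ?_⟩
    by_contra hh
    rw [hc _ _ _ this.1 (not_lt.1 hh)] at this
    exact absurd this.2 (by decide)
  refine ⟨L, hperm.nodup_iff.2 T.nodup_toList, hlt, hsort.isChain, ?_⟩
  funext v
  set y := L.foldl (fun w t => tofFun n t.1 t.2.1 t.2.2 w) v with hy
  rw [← Equiv.eq_symm_apply]
  ext m
  have h1 := stair_eval n L hlt hsort v y hy m
  rw [(hperm.map _).sum_eq, Finset.sum_map_toList] at h1
  rw [hμ]
  have h2 : ∑ t ∈ T, (if t.2.2 = m then y t.1 * y t.2.1 else 0) =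
      ∑ i, ∑ j, if i < j then y i * y j * c i j m else 0 := by
    rw [Finset.sum_filter, Fintype.sum_prod_type]
    refine Finset.sum_congr rfl fun i _ => ?_
    rw [Fintype.sum_prod_type]
    refine Finset.sum_congr rfl fun j _ => ?_
    rw [Finset.sum_eq_single m]
    · by_cases hij : i < j
      · rcases zmod2_cases (c i j m) with e | e <;> simp [hij, e]
      · simp [hij]
    · intro k _ hk
      simp [hk]
    · simp
  rw [h2] at h1
  rw [h1, add_assoc, CharTwo.add_self_eq_zero, add_zero]

/-! ### Assembly -/

lemma linear_aff (n : ℕ) (Φ : QV n ≃ₗ[ZMod 2] QV n) : IsAff n Φ.toEquiv := by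
  intro x w
  simp

lemma addRight_aff (n : ℕ) (a : QV n) : IsAff n (Equiv.addRight a) := by
  intro x w
  simp only [Equiv.coe_addRight, zero_add]
  linear_combination -qv_self n a

lemma aff_comp (n : ℕ) {f g : QV n → QV n} (hf : IsAff n f) (hg : IsAff n g) :
    IsAff n (fun x => g (f x)) := by
  intro x w
  simp only [hf x w]
  rw [hg, hg]
  linear_combination qv_self n (g 0)

lemma C3_left (n : ℕ) (f g : QV n ≃ QV n) (hf : permGate n f ∈ CliffordLevel n 3)
    (hg : IsAff n g) : permGate n (f.trans g) ∈ CliffordLevel n 3 := by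
  rw [← perm_mul_perm]
  refine C2_mul_C3 n (aff_mem_C2 n g hg) ?_ hf
  rw [star_perm]
  exact aff_mem_C2 n _ hg.symm

lemma C3_right (n : ℕ) (f g : QV n ≃ QV n) (hf : permGate n f ∈ CliffordLevel n 3)
    (hg : IsAff n g) : permGate n (g.trans f) ∈ CliffordLevel n 3 := by
  rw [← perm_mul_perm]
  exact C3_mul_C2 n hf (aff_mem_C2 n g hg)

/-- The normalized case: `μ` fixes the basis and has descending multiplication. -/
lemma stair_normalized (n : ℕ) (μ : QV n ≃ QV n) (h3 : permGate n μ ∈ CliffordLevel n 3)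
    (h0 : μ.symm 0 = 0) (he : ∀ i, μ.symm (stdBasis n i) = stdBasis n i)
    (h : GoodMul n (gmul n μ)) (hd : Desc n (gmul n μ)) : IsStaircase n μ := by
  have htail := tail_induct n μ h hd (fun k x => tailV n k x)
    (fun k x hx m hm => hx m (by omega)) (by rw [h0]; intro m _; rfl)
    (fun k x hx => by
      rw [he]
      refine tailV_add (fun m hm => ?_) (fun m hm => hx m (by omega))
      have : m ≠ k := fun e => by rw [e] at hm; exact lt_irrefl _ hm
      simp [stdBasis, this])
  refine stair_of_inv n μ (fun i j m => pol n μ.symm (stdBasis n i) (stdBasis n j) m) ?_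
    (quad_expand n μ.symm h0 he (C3_Q n μ h3))
  intro i j m hij hmj
  set a := stdBasis n i
  set b := stdBasis n j
  have hz : tailV n (j.val + 1) (gmul n μ a b) := fun k hk =>
    hd a j k (by rw [Fin.le_def]; omega)
  have e1 : μ.symm a + μ.symm b = μ.symm ((a + b) + gmul n μ a b) := by
    rw [Equiv.eq_symm_apply, gmul_circ]
    abel
  have e2 := symm_shift n μ h (a + b) (gmul n μ a b)
  have e3 := htail (j.val + 1) j.2 _ (tailV_add hz (tailV_mul h hd (a + b) hz))
  rw [← e1] at e2
  have e4 : pol n μ.symm a b = μ.symm (gmul n μ a b + gmul n μ (a + b) (gmul n μ a b)) := by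
    unfold pol
    rw [h0, add_zero, add_assoc, e2, ← add_assoc, qv_self, zero_add]
  rw [e4]
  exact e3 m (by have := Fin.le_def.1 hmj; omega)

/-- Every permutation gate in `𝒞₃` is, up to left/right multiplication by
Clifford permutation gates, a staircase-form permutation gate in `𝒞₃`. -/
theorem stmt0 (n : ℕ) (hn : 1 ≤ n) (f : QV n ≃ QV n)
    (hf : permGate n f ∈ CliffordLevel n 3) :
    ∃ φ₁ φ₂ μ : QV n ≃ QV n,
      permGate n φ₁ ∈ CliffordLevel n 2 ∧
      permGate n φ₂ ∈ CliffordLevel n 2 ∧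
      IsStaircase n ⇑μ ∧
      permGate n μ ∈ CliffordLevel n 3 ∧
      f = (φ₂.trans μ).trans φ₁ := by

  let f0 : QV n ≃ QV n := f.trans (Equiv.addRight (f 0))
  have hf0 : permGate n f0 ∈ CliffordLevel n 3 := C3_left n _ _ hf (addRight_aff n _)
  have f00 : f0 0 = 0 := by simp [f0, qv_self]
  have hgood0 := gmul_good n f0 f00 (C3_A n f0 hf0)
  obtain ⟨Φ, hΦ⟩ := hgood0.exists_basis
  let g : QV n ≃ QV n := f0.trans Φ.symm.toEquiv
  have hg : permGate n g ∈ CliffordLevel n 3 := C3_left n _ _ hf0 (linear_aff n _)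
  have g0 : g 0 = 0 := by simp [g, f00]
  have g0' : g.symm 0 = 0 := by rw [Equiv.symm_apply_eq, g0]
  have hgood := gmul_good n g g0 (C3_A n g hg)
  have hdesc : Desc n (gmul n g) := by
    intro x j m hmj
    have : gmul n g x (stdBasis n j) = Φ.symm (gmul n f0 (Φ x) (Φ (stdBasis n j))) := by
      simp [gmul, g]
    rw [this]
    exact hΦ _ j m hmj
  let l : QV n →ₗ[ZMod 2] QV n :=
    Fintype.linearCombination (ZMod 2) (fun i => g.symm (stdBasis n i))
  have hle : ∀ i, l (stdBasis n i) = g.symm (stdBasis n i) := by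
    intro i
    simp only [l, Fintype.linearCombination_apply]
    rw [Finset.sum_eq_single i]
    · simp [stdBasis]
    · intro j _ hj; simp [stdBasis, hj]
    · simp
  have hsurj : Function.Surjective l := by
    intro y
    have := tail_induct n g hgood hdesc (fun _ x => x ∈ LinearMap.range l) (fun _ _ h => h)
      (by rw [g0']; exact Submodule.zero_mem _)
      (fun k x hx => Submodule.add_mem _ ⟨_, hle k⟩ hx) 0 (Nat.zero_le _) (g y)
      (fun m hm => absurd hm (Nat.not_lt_zero _))
    simpa using this
  let E : QV n ≃ₗ[ZMod 2] QV n :=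
    LinearEquiv.ofBijective l ⟨LinearMap.injective_iff_surjective.2 hsurj, hsurj⟩
  have hE : ∀ i, E (stdBasis n i) = g.symm (stdBasis n i) := hle
  let μ : QV n ≃ QV n := E.toEquiv.trans g
  have hμ : permGate n μ ∈ CliffordLevel n 3 := C3_right n _ _ hg (linear_aff n _)
  have hmul : gmul n μ = gmul n g := by
    funext x y
    simp [gmul, μ]
  refine ⟨Φ.toEquiv.trans (Equiv.addRight (f 0)), E.symm.toEquiv, μ, ?_, ?_, ?_, hμ, ?_⟩
  · exact aff_mem_C2 n _ (aff_comp n (f := Φ.toEquiv) (g := Equiv.addRight (f 0))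
      (linear_aff n Φ) (addRight_aff n (f 0)))
  · exact aff_mem_C2 n _ (linear_aff n _)
  · refine stair_normalized n μ hμ ?_ ?_ (by rw [hmul]; exact hgood) (by rw [hmul]; exact hdesc)
    · simp [μ, g0']
    · intro i
      simp [μ, ← hE]
  · ext1 x
    simp [μ, g, f0, add_assoc, qv_self]
end

section
/- For any descending multiplication on 𝔽₂ⁿ, the map π on 𝔽₂ⁿ defined by π(∑_{i∈S} eᵢ) = ∑_{∅≠T⊆S} ∏_{i∈T} eᵢ for every S ⊆ [n] is a bijection of 𝔽₂ⁿ, and the corresponding permutation gate is in staircase form and lies in 𝒞₃. -/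
namespace DM
variable {n : ℕ} {mul : QV n → QV n → QV n}

def Alg (n : ℕ) (mul : QV n → QV n → QV n) (_ : IsDescendingMul n mul) := QV n

theorem zero_mul' (h : IsDescendingMul n mul) (v : QV n) : mul 0 v = 0 := by
  have := h.1 0 0 v
  simpa using this
theorem mul_zero' (h : IsDescendingMul n mul) (v : QV n) : mul v 0 = 0 := by
  have := h.2.1 v 0 0
  simpa using this

theorem zmod2 (a : ZMod 2) : a = 0 ∨ a = 1 := by
  revert a; decide

theorem add_self (v : QV n) : v + v = 0 := by
  funext i; exact CharTwo.add_self_eq_zero _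

theorem smul_mul' (h : IsDescendingMul n mul) (a : ZMod 2) (u v : QV n) :
    mul (a • u) v = a • mul u v := by
  rcases zmod2 a with rfl | rfl <;> simp [zero_mul' h]

theorem mul_smul' (h : IsDescendingMul n mul) (a : ZMod 2) (u v : QV n) :
    mul u (a • v) = a • mul u v := by
  rcases zmod2 a with rfl | rfl <;> simp [mul_zero' h]

instance (h : IsDescendingMul n mul) : AddCommGroup (Alg n mul h) :=
  inferInstanceAs (AddCommGroup (QV n))
instance (h : IsDescendingMul n mul) : Module (ZMod 2) (Alg n mul h) :=
  inferInstanceAs (Module (ZMod 2) (QV n))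
instance (h : IsDescendingMul n mul) : NonUnitalCommRing (Alg n mul h) :=
  { (inferInstance : AddCommGroup (Alg n mul h)) with
    mul := fun a b => mul a b
    left_distrib := h.2.1
    right_distrib := fun a b c => h.1 a b c
    zero_mul := zero_mul' h
    mul_zero := mul_zero' h
    mul_assoc := h.2.2.1
    mul_comm := h.2.2.2.1 }
instance (h : IsDescendingMul n mul) : IsScalarTower (ZMod 2) (Alg n mul h) (Alg n mul h) :=
  ⟨fun a u v => smul_mul' h a u v⟩
instance (h : IsDescendingMul n mul) : SMulCommClass (ZMod 2) (Alg n mul h) (Alg n mul h) :=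
  ⟨fun a u v => (mul_smul' h a u v).symm⟩

theorem exists_ring (h : IsDescendingMul n mul) : ∃ (R : Type) (_ : CommRing R) (f : QV n →+ R),
    Function.Injective f ∧ ∀ u v, f (mul u v) = f u * f v := by
  refine ⟨Unitization (ZMod 2) (Alg n mul h), inferInstance,
    ⟨⟨fun v => Unitization.inr (R := ZMod 2) (show Alg n mul h from v), ?_⟩, ?_⟩, ?_, ?_⟩
  · exact Unitization.inr_zero _
  · intro u v; exact Unitization.inr_add _ _ _
  · exact Unitization.inr_injective
  · intro u v; exact Unitization.inr_mul _ _ _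

def supp (v : QV n) : Finset (Fin n) := Finset.univ.filter (fun i => v i = 1)

theorem sum_basis (S : Finset (Fin n)) (m : Fin n) :
    (∑ i ∈ S, stdBasis n i) m = if m ∈ S then 1 else 0 := by
  simp [stdBasis, Finset.sum_apply]

theorem supp_sum (S : Finset (Fin n)) : supp (∑ i ∈ S, stdBasis n i) = S := by
  ext m
  simp only [supp, Finset.mem_filter, Finset.mem_univ, true_and, sum_basis]
  split_ifs with hm <;> simp [hm]

theorem sum_supp (v : QV n) : ∑ i ∈ supp v, stdBasis n i = v := by
  funext m
  rw [sum_basis]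
  rcases zmod2 (v m) with hm | hm <;> simp [supp, hm]

theorem sum_smul_basis (v : QV n) : ∑ i, v i • stdBasis n i = v := by
  funext m
  simp [stdBasis, Finset.sum_apply]

def dmPi (n : ℕ) (mul : QV n → QV n → QV n) (v : QV n) : QV n :=
  ∑ T ∈ (supp v).powerset.erase ∅, dmProd n mul T

theorem dmPi_spec : dmPiSpec n mul (dmPi n mul) := by
  intro S
  rw [dmPi, supp_sum]

theorem ring_list {R : Type} [CommRing R] (f : QV n →+ R)
    (hf : ∀ u v, f (mul u v) = f u * f v) (l : List (Fin n)) (hl : l ≠ []) :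
    f (dmProdList n mul l) = (l.map (fun i => f (stdBasis n i))).prod := by
  induction l with
  | nil => exact absurd rfl hl
  | cons i l ih =>
    cases l with
    | nil => simp [dmProdList]
    | cons j l =>
      rw [dmProdList, hf, ih (by simp), List.map_cons (l := j :: l), List.prod_cons]

theorem ring_prod {R : Type} [CommRing R] (f : QV n →+ R)
    (hf : ∀ u v, f (mul u v) = f u * f v) (T : Finset (Fin n)) (hT : T ≠ ∅) :
    f (dmProd n mul T) = ∏ i ∈ T, f (stdBasis n i) := by
  rw [dmProd, ring_list f hf]
  · conv_rhs => rw [← Finset.sort_toFinset T (· ≤ ·)]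
    rw [List.prod_toFinset _ (Finset.sort_nodup T (· ≤ ·))]
  · intro h0
    apply hT
    rw [← Finset.sort_toFinset T (· ≤ ·), h0]; rfl

theorem ring_pi {R : Type} [CommRing R] (f : QV n →+ R)
    (hf : ∀ u v, f (mul u v) = f u * f v) (v : QV n) :
    1 + f (dmPi n mul v) = ∏ i, (1 + f (v i • stdBasis n i)) := by
  have h1 : ∏ i, (1 + f (v i • stdBasis n i)) = ∏ i ∈ supp v, (1 + f (stdBasis n i)) := by
    rw [supp, Finset.prod_filter]
    refine Finset.prod_congr rfl fun i _ => ?_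
    rcases zmod2 (v i) with hm | hm <;> simp [hm]
  rw [h1, Finset.prod_one_add, ← Finset.add_sum_erase _ _ (Finset.empty_mem_powerset (supp v)),
    Finset.prod_empty, dmPi, map_sum]
  congr 1
  refine Finset.sum_congr rfl fun T hT => ?_
  exact ring_prod f hf T (Finset.ne_of_mem_erase hT)

theorem pi_add (h : IsDescendingMul n mul) (u v : QV n) :
    dmPi n mul (u + v) = dmPi n mul u + dmPi n mul v + mul (dmPi n mul u) (dmPi n mul v) := by
  obtain ⟨R, _, f, hinj, hf⟩ := exists_ring h
  apply hinj
  apply add_left_cancel (a := (1 : R))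
  have : 1 + f (dmPi n mul (u + v)) = (1 + f (dmPi n mul u)) * (1 + f (dmPi n mul v)) := by
    rw [ring_pi f hf, ring_pi f hf, ring_pi f hf, ← Finset.prod_mul_distrib]
    refine Finset.prod_congr rfl fun i _ => ?_
    have h0 : f (u i • stdBasis n i) * f (v i • stdBasis n i) = 0 := by
      rw [← hf, smul_mul' h, mul_smul' h, h.2.2.2.2.1]; simp
    rw [Pi.add_apply, add_smul, map_add]
    linear_combination -h0
  rw [this, map_add, map_add, hf]
  ring

theorem pi_zero : dmPi n mul 0 = 0 := by
  have := dmPi_spec (mul := mul) ∅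
  simpa using this

theorem pi_basis (i : Fin n) : dmPi n mul (stdBasis n i) = stdBasis n i := by
  have := dmPi_spec (mul := mul) {i}
  have e : ({i} : Finset (Fin n)).powerset.erase ∅ = {{i}} := by
    ext T; simp [Finset.subset_singleton_iff]; aesop
  rw [e] at this
  simpa [dmProd, dmProdList] using this

theorem mul_expand (h : IsDescendingMul n mul) (u v : QV n) :
    mul u v = ∑ i, ∑ j, (u i * v j) • mul (stdBasis n i) (stdBasis n j) := by
  have hl : ∀ (s : Finset (Fin n)) (a : Fin n → QV n) (w : QV n),
      mul (∑ i ∈ s, a i) w = ∑ i ∈ s, mul (a i) w := fun s a w =>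
    map_sum (⟨⟨fun x => mul x w, zero_mul' h w⟩, fun x y => h.1 x y w⟩ : QV n →+ QV n) a s
  have hr : ∀ (s : Finset (Fin n)) (a : Fin n → QV n) (w : QV n),
      mul w (∑ i ∈ s, a i) = ∑ i ∈ s, mul w (a i) := fun s a w =>
    map_sum (⟨⟨fun x => mul w x, mul_zero' h w⟩, fun x y => h.2.1 w x y⟩ : QV n →+ QV n) a s
  conv_lhs => rw [← sum_smul_basis u, ← sum_smul_basis v, hl]
  refine Finset.sum_congr rfl fun i _ => ?_
  rw [hr]
  refine Finset.sum_congr rfl fun j _ => ?_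
  rw [smul_mul' h, mul_smul' h, smul_smul]

theorem mul_self' (h : IsDescendingMul n mul) (u : QV n) : mul u u = 0 := by
  suffices H : ∀ S : Finset (Fin n), mul (∑ i ∈ S, stdBasis n i) (∑ i ∈ S, stdBasis n i) = 0 by
    rw [← sum_supp u]; exact H _
  intro S
  induction S using Finset.induction_on with
  | empty => simp [zero_mul' h]
  | insert a S ha ih =>
    rw [Finset.sum_insert ha, h.1, h.2.1, h.2.1, ih, h.2.2.2.2.1,
      h.2.2.2.1 (∑ i ∈ S, stdBasis n i), zero_add, add_zero, add_self]

def F (j : ℕ) (v : QV n) : Prop := ∀ m : Fin n, m.val < j → v m = 0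

theorem F_add {j : ℕ} {u v : QV n} (hu : F j u) (hv : F j v) : F j (u + v) := by
  intro m hm; simp [hu m hm, hv m hm]

theorem F_mono {j k : ℕ} (hjk : j ≤ k) {u : QV n} (hu : F k u) : F j u :=
  fun m hm => hu m (lt_of_lt_of_le hm hjk)

theorem F_mul (h : IsDescendingMul n mul) {j : ℕ} (u v : QV n) (hv : F j v) :
    F (j + 1) (mul u v) := by
  intro m hm
  rw [mul_expand h, Finset.sum_apply]
  refine Finset.sum_eq_zero fun i _ => ?_
  rw [Finset.sum_apply]
  refine Finset.sum_eq_zero fun k _ => ?_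
  by_cases hk : k.val < j
  · simp [hv k hk]
  · have hmk : m ≤ k := by rw [Fin.le_def]; omega
    have : mul (stdBasis n i) (stdBasis n k) m = 0 := by
      rcases lt_trichotomy i k with hik | hik | hik
      · exact h.2.2.2.2.2 i k hik m hmk
      · subst hik; rw [h.2.2.2.2.1]; rfl
      · rw [h.2.2.2.1]; exact h.2.2.2.2.2 k i hik m (hmk.trans hik.le)
    simp [this]

theorem F_pi (h : IsDescendingMul n mul) (d : ℕ) : ∀ (j : ℕ), n ≤ j + d → ∀ v : QV n, F j v →
    F (j + 1) (dmPi n mul v + v) := by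
  induction d with
  | zero =>
    intro j hj v hv
    have : v = 0 := by funext m; exact hv m (by omega)
    subst this
    rw [pi_zero]; intro m _; simp
  | succ d ih =>
    intro j hj v hv
    by_cases hjn : j < n
    · have key : ∀ v : QV n, F (j+1) v → F (j+2) (dmPi n mul v + v) := ih (j+1) (by omega)
      rcases zmod2 (v ⟨j, hjn⟩) with h0 | h1
      · refine F_mono (by omega) (key v ?_)
        intro m hm
        rcases Nat.lt_succ_iff_lt_or_eq.mp hm with hlt | heq
        · exact hv m hlt
        · rw [← h0]; congr 1; exact Fin.ext heq
      · set e := stdBasis n ⟨j, hjn⟩ with he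
        have hv' : F (j+1) (e + v) := by
          intro m hm
          rcases Nat.lt_succ_iff_lt_or_eq.mp hm with hlt | heq
          · have : m ≠ ⟨j, hjn⟩ := by rintro rfl; simp at hlt
            simp [he, stdBasis, this, hv m hlt]
          · have : m = ⟨j, hjn⟩ := Fin.ext heq
            subst this
            simp only [he, stdBasis, Pi.add_apply, h1, if_true]; decide
        set v' := e + v with hv'd
        have hvv : v = e + v' := by rw [hv'd, ← add_assoc, add_self, zero_add]
        have hp : F (j+1) (dmPi n mul v') := by
          have := F_add (F_mono (by omega) (key v' hv')) hv'
          rwa [add_assoc, add_self, add_zero] at this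
        have hm := F_mul h e _ hp
        have : dmPi n mul v + v = (dmPi n mul v' + v') + mul e (dmPi n mul v') := by
          rw [hvv, pi_add h, he, pi_basis]
          have := add_self (stdBasis n ⟨j, hjn⟩)
          linear_combination this
        rw [this]
        exact F_mono (by omega) (F_add (key v' hv') hm)
    · have : v = 0 := by funext m; exact hv m (by omega)
      subst this
      rw [pi_zero]; intro m _; simp

theorem F_log (h : IsDescendingMul n mul) (k : ℕ) (w : QV n) (hw : F k (dmPi n mul w)) :
    F k w := by
  have : ∀ j, j ≤ k → F j w := by
    intro j
    induction j with
    | zero => intro _ m hm; omega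
    | succ j ih =>
      intro hj
      have h1 := F_pi h n j (by omega) w (ih (by omega))
      have := F_add (F_mono hj hw) h1
      rwa [← add_assoc, add_self, zero_add] at this
  exact this k le_rfl

theorem pi_inj (h : IsDescendingMul n mul) : Function.Injective (dmPi n mul) := by
  intro u v huv
  have h0 : dmPi n mul (u + v) = 0 := by
    rw [pi_add h, huv, add_self, mul_self' h, add_zero]
  have h1 : F n (u + v) := F_log h n _ (by rw [h0]; intro m _; rfl)
  have h2 : u + v = 0 := by funext m; exact h1 m m.2
  calc u = (u + v) + v := by rw [add_assoc, add_self, add_zero]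
    _ = v := by rw [h2, zero_add]

noncomputable def piEquiv (h : IsDescendingMul n mul) : QV n ≃ QV n :=
  Equiv.ofBijective (dmPi n mul) (Finite.injective_iff_bijective.mp (pi_inj h))

theorem piEquiv_coe (h : IsDescendingMul n mul) : ⇑(piEquiv h) = dmPi n mul := rfl

noncomputable def lg (h : IsDescendingMul n mul) : QV n → QV n := (piEquiv h).symm

theorem pi_lg (h : IsDescendingMul n mul) (w : QV n) : dmPi n mul (lg h w) = w :=
  (piEquiv h).apply_symm_apply w
theorem lg_pi (h : IsDescendingMul n mul) (w : QV n) : lg h (dmPi n mul w) = w :=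
  (piEquiv h).symm_apply_apply w

theorem lg_circ (h : IsDescendingMul n mul) (a b : QV n) :
    lg h (a + b + mul a b) = lg h a + lg h b := by
  apply pi_inj h
  rw [pi_add h, pi_lg, pi_lg, pi_lg]

theorem mul_self_mul (h : IsDescendingMul n mul) (a b : QV n) : mul a (mul a b) = 0 := by
  rw [← h.2.2.1, mul_self' h, zero_mul' h]

theorem lg_add_mul (h : IsDescendingMul n mul) (x y z : QV n) :
    lg h (mul x (y + z)) = lg h (mul x y) + lg h (mul x z) := by
  rw [← lg_circ h]
  have : mul (mul x y) (mul x z) = 0 := by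
    rw [h.2.2.2.1 x y, h.2.2.1, mul_self_mul h, mul_zero' h]
  rw [this, add_zero, h.2.1]

theorem lg_zero (h : IsDescendingMul n mul) : lg h 0 = 0 := by
  conv_lhs => rw [← pi_zero (mul := mul), lg_pi]

theorem lg_add (h : IsDescendingMul n mul) (x y : QV n) :
    lg h (x + y) = lg h x + lg h y + lg h (mul x y) := by
  have h1 : x + y = x + (y + mul x y) + mul x (y + mul x y) := by
    rw [h.2.1, mul_self_mul h, add_zero, add_assoc, add_assoc, add_self, add_zero]
  have h2 : y + mul x y = y + mul x y + mul y (mul x y) := by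
    rw [h.2.2.2.1 x y, mul_self_mul h, add_zero]
  rw [h1, lg_circ h, h2, lg_circ h, add_assoc]

theorem lg_basis (h : IsDescendingMul n mul) (i : Fin n) :
    lg h (stdBasis n i) = stdBasis n i := by
  conv_lhs => rw [← pi_basis (mul := mul) i, lg_pi]

theorem lg_mul_sum (h : IsDescendingMul n mul) (x : QV n) (s : Finset (Fin n)) (a : Fin n → QV n) :
    lg h (mul x (∑ i ∈ s, a i)) = ∑ i ∈ s, lg h (mul x (a i)) :=
  map_sum (⟨⟨fun y => lg h (mul x y), by simp [mul_zero' h, lg_zero h]⟩,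
    fun y z => lg_add_mul h x y z⟩ : QV n →+ QV n) a s

theorem lg_sum (h : IsDescendingMul n mul) (S : Finset (Fin n)) :
    lg h (∑ i ∈ S, stdBasis n i) = ∑ i ∈ S, stdBasis n i +
      ∑ p ∈ Finset.univ.filter (fun p : Fin n × Fin n => p.1 < p.2 ∧ p.1 ∈ S ∧ p.2 ∈ S),
        lg h (mul (stdBasis n p.1) (stdBasis n p.2)) := by
  induction S using Finset.induction_on_max with
  | empty => simp [lg_zero h]
  | insert a S hS ih =>
    have ha : a ∉ S := fun h => lt_irrefl _ (hS a h)
    have hset : Finset.univ.filter (fun p : Fin n × Fin n =>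
          p.1 < p.2 ∧ p.1 ∈ insert a S ∧ p.2 ∈ insert a S) =
        Finset.univ.filter (fun p : Fin n × Fin n => p.1 < p.2 ∧ p.1 ∈ S ∧ p.2 ∈ S) ∪
          S.map ⟨fun i => (i, a), fun i j hij => congrArg Prod.fst hij⟩ := by
      ext ⟨i, j⟩
      simp only [Finset.mem_filter, Finset.mem_univ, true_and, Finset.mem_insert,
        Finset.mem_union, Finset.mem_map]
      constructor
      · rintro ⟨hij, rfl | hi, rfl | hj⟩
        · exact absurd hij (lt_irrefl _)
        · exact absurd (hS j hj) (not_lt.mpr hij.le)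
        · exact Or.inr ⟨i, hi, rfl⟩
        · exact Or.inl ⟨hij, hi, hj⟩
      · rintro (⟨hij, hi, hj⟩ | ⟨k, hk, heq⟩)
        · exact ⟨hij, Or.inr hi, Or.inr hj⟩
        · cases heq
          exact ⟨hS _ hk, Or.inr hk, Or.inl rfl⟩
    rw [hset, Finset.sum_union, Finset.sum_map, Finset.sum_insert ha, lg_add h, lg_basis, ih,
      lg_mul_sum h]
    · have : ∀ i, mul (stdBasis n a) (stdBasis n i) = mul (stdBasis n i) (stdBasis n a) :=
        fun i => h.2.2.2.1 _ _
      simp only [this]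
      abel
    · rw [Finset.disjoint_left]
      rintro ⟨i, j⟩ hp hq
      simp only [Finset.mem_filter, Finset.mem_map] at hp hq
      obtain ⟨k, hk, heq⟩ := hq
      cases heq
      exact ha hp.2.2.2

noncomputable def cf (h : IsDescendingMul n mul) (i j k : Fin n) : ZMod 2 :=
  lg h (mul (stdBasis n i) (stdBasis n j)) k

theorem F_basis (j : Fin n) : F j.val (stdBasis n j) := by
  intro m hm
  have : m ≠ j := by rintro rfl; exact lt_irrefl _ hm
  simp [stdBasis, this]

theorem cf_zero (h : IsDescendingMul n mul) (i j k : Fin n) (hk : ¬ j < k) : cf h i j k = 0 := by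
  refine F_log h (j.val + 1) _ ?_ k (by rw [Fin.lt_def] at hk; omega)
  change F _ (dmPi n mul (lg h _))
  rw [pi_lg]
  exact F_mul h _ _ (F_basis j)

theorem lg_formula (h : IsDescendingMul n mul) (w : QV n) (k : Fin n) :
    lg h w k = w k + ∑ p ∈ Finset.univ.filter (fun p : Fin n × Fin n =>
      p.1 < p.2 ∧ p.2 < k ∧ cf h p.1 p.2 k = 1), w p.1 * w p.2 := by
  conv_lhs => rw [← sum_supp w, lg_sum h, sum_supp w]
  rw [Pi.add_apply, Finset.sum_apply, Finset.sum_filter, Finset.sum_filter]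
  congr 1
  refine Finset.sum_congr rfl fun p _ => ?_
  change (if _ then cf h p.1 p.2 k else 0) = _
  have hz := cf_zero h p.1 p.2 k
  simp only [supp, Finset.mem_filter, Finset.mem_univ, true_and]
  rcases zmod2 (cf h p.1 p.2 k) with hc | hc
  · simp [hc]
  · have : p.2 < k := by
      by_contra hk; rw [hz hk] at hc; exact absurd hc (by decide)
    rcases zmod2 (w p.1) with h1 | h1 <;> rcases zmod2 (w p.2) with h2 | h2 <;>
      simp [hc, this, h1, h2]

noncomputable def stair (h : IsDescendingMul n mul) (k : Fin n) : List (Fin n × Fin n × Fin n) :=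
  (Finset.univ.filter (fun p : Fin n × Fin n =>
      p.1 < p.2 ∧ p.2 < k ∧ cf h p.1 p.2 k = 1)).toList.map (fun p => (p.1, p.2, k))

def app (w : QV n) (t : Fin n × Fin n × Fin n) : QV n := tofFun n t.1 t.2.1 t.2.2 w

theorem fold_pairs (k : Fin n) (l : List (Fin n × Fin n)) (hl : ∀ p ∈ l, p.1 < p.2 ∧ p.2 < k)
    (w : QV n) (m : Fin n) :
    (l.map (fun p => (p.1, p.2, k))).foldl app w m =
      if m = k then w k + (l.map (fun p => w p.1 * w p.2)).sum else w m := by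
  induction l generalizing w with
  | nil => by_cases hm : m = k <;> simp [hm]
  | cons p l ih =>
    rw [List.map_cons, List.foldl_cons, ih (fun q hq => hl q (List.mem_cons_of_mem _ hq))]
    have hne : ∀ i : Fin n, i ≠ k → app w (p.1, p.2, k) i = w i := by
      intro i hi; simp [app, tofFun, hi]
    have hk : app w (p.1, p.2, k) k = w k + w p.1 * w p.2 := by simp [app, tofFun]
    have hs : l.map (fun q => app w (p.1, p.2, k) q.1 * app w (p.1, p.2, k) q.2) =
        l.map (fun q => w q.1 * w q.2) := by
      refine List.map_congr_left fun q hq => ?_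
      have := hl q (List.mem_cons_of_mem _ hq)
      rw [hne _ (this.1.trans this.2).ne, hne _ this.2.ne]
    split_ifs with hm
    · rw [hs, hk, List.map_cons, List.sum_cons, add_assoc]
    · exact hne m hm

theorem fold_stair (h : IsDescendingMul n mul) (v : QV n) (ks : List (Fin n))
    (hks : ks.Pairwise (· < ·)) (w : QV n)
    (hw : ∀ m, w m = if m ∈ ks then v m else dmPi n mul v m) :
    (ks.flatMap (stair h)).foldl app w = dmPi n mul v := by
  induction ks generalizing w with
  | nil => funext m; simpa using hw m
  | cons k ks ih =>
    rw [List.flatMap_cons, List.foldl_append]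
    rw [List.pairwise_cons] at hks
    refine ih hks.2 _ fun m => ?_
    rw [stair, fold_pairs k _ (by intro p hp; simp at hp; exact ⟨hp.1, hp.2.1⟩)]
    have hlt : ∀ i, i < k → w i = dmPi n mul v i := by
      intro i hi
      rw [hw, if_neg]
      intro hmem
      rcases List.mem_cons.mp hmem with rfl | hmem
      · exact lt_irrefl _ hi
      · exact lt_asymm hi (hks.1 i hmem)
    split_ifs with hm hmem hmem
    · subst hm; exact absurd (hks.1 m hmem) (lt_irrefl _)
    · subst hm
      rw [Finset.sum_map_toList]
      have hf := lg_formula h (dmPi n mul v) m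
      rw [lg_pi] at hf
      have hwm : w m = v m := by rw [hw]; simp
      rw [hwm, hf, add_assoc]
      have : ∀ a b c : ZMod 2, b = c → a + (b + c) = a := by decide
      apply this
      refine Finset.sum_congr rfl fun p hp => ?_
      simp only [Finset.mem_filter] at hp
      rw [hlt _ (hp.2.1.trans hp.2.2.1), hlt _ hp.2.2.1]
    · rw [hw]; simp [hmem]
    · rw [hw]; simp [hmem, hm]

theorem staircase (h : IsDescendingMul n mul) : IsStaircase n (dmPi n mul) := by
  refine ⟨(List.finRange n).flatMap (stair h), ?_, ?_, ?_, ?_⟩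
  · rw [List.nodup_flatMap]
    constructor
    · intro k _
      refine List.Nodup.map ?_ (Finset.nodup_toList _)
      rintro ⟨a, b⟩ ⟨c, d⟩ he
      simp at he; simp [he]
    · refine (List.pairwise_lt_finRange n).imp ?_
      intro a b hab x hxa hxb
      simp only [stair, List.mem_map] at hxa hxb
      obtain ⟨_, _, rfl⟩ := hxa
      obtain ⟨_, _, he⟩ := hxb
      simp only [Prod.mk.injEq] at he
      exact hab.ne he.2.2.symm
  · intro t ht
    simp only [List.mem_flatMap, stair, List.mem_map, Finset.mem_toList, Finset.mem_filter] at ht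
    obtain ⟨k, _, p, hp, rfl⟩ := ht
    exact ⟨hp.2.1, hp.2.2.1⟩
  · refine List.Pairwise.isChain ?_
    rw [List.pairwise_flatMap]
    constructor
    · intro k _
      rw [List.pairwise_iff_forall_sublist]
      intro a b hab
      have ha : a ∈ stair h k := hab.subset (by simp)
      have hb : b ∈ stair h k := hab.subset (by simp)
      simp only [stair, List.mem_map] at ha hb
      obtain ⟨_, _, rfl⟩ := ha
      obtain ⟨_, _, rfl⟩ := hb
      exact le_rfl
    · refine (List.pairwise_lt_finRange n).imp ?_
      intro a b hab x hxa y hyb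
      simp only [stair, List.mem_map] at hxa hyb
      obtain ⟨_, _, rfl⟩ := hxa
      obtain ⟨_, _, rfl⟩ := hyb
      exact hab.le
  · funext v
    exact (fold_stair h v _ (List.pairwise_lt_finRange n) v (by intro m; simp)).symm

/-! ### Gates -/

noncomputable def chi (a : ZMod 2) : ℂ := (-1) ^ a.val

theorem chi_nat (N : ℕ) : chi (N : ZMod 2) = (-1) ^ N := by
  rw [chi, ZMod.val_natCast, ← neg_one_pow_eq_pow_mod_two]

theorem chi_add (a b : ZMod 2) : chi (a + b) = chi a * chi b := by
  rw [← ZMod.natCast_zmod_val a, ← ZMod.natCast_zmod_val b, ← Nat.cast_add, chi_nat, chi_nat,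
    chi_nat, pow_add]

theorem chi_star (a : ZMod 2) : star (chi a) = chi a := by
  simp [chi]

theorem chi_zero : chi 0 = 1 := by simp [chi]

noncomputable def mono (s : QV n ≃ QV n) (q : QV n → ZMod 2) : QMat n :=
  fun a b => if a = s b then chi (q b) else 0

theorem mono_mul (s t : QV n ≃ QV n) (q r : QV n → ZMod 2) :
    mono s q * mono t r = mono (t.trans s) (fun b => r b + q (t b)) := by
  ext a b
  rw [Matrix.mul_apply, Finset.sum_eq_single (t b)]
  · simp [mono, chi_add, mul_comm]
  · intro c _ hc; simp [mono, hc]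
  · simp

theorem mono_star (s : QV n ≃ QV n) (q : QV n → ZMod 2) :
    star (mono s q) = mono s.symm (fun a => q (s.symm a)) := by
  ext a b
  rw [Matrix.star_apply]
  by_cases hb : b = s a
  · subst hb; simp only [mono, if_true, Equiv.symm_apply_apply, chi_star]
  · have : a ≠ s.symm b := by rintro rfl; simp at hb
    simp [mono, hb, this]

theorem mono_one : mono (Equiv.refl (QV n)) (fun _ => 0) = 1 := by
  ext a b
  simp [mono, chi_zero, Matrix.one_apply]

theorem mono_congr (s t : QV n ≃ QV n) (q r : QV n → ZMod 2) (hs : ∀ b, s b = t b)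
    (hq : ∀ b, q b = r b) : mono s q = mono t r := by
  rw [Equiv.ext hs, funext hq]

theorem mono_smul (s : QV n ≃ QV n) (q : QV n → ZMod 2) (k : ZMod 2) :
    chi k • mono s q = mono s (fun b => q b + k) := by
  ext a b
  rw [Matrix.smul_apply, smul_eq_mul]
  simp only [mono, chi_add, mul_ite, mul_zero, mul_comm]

theorem mono_unitary (s : QV n ≃ QV n) (q : QV n → ZMod 2) :
    mono s q ∈ Matrix.unitaryGroup (QV n) ℂ := by
  rw [Matrix.mem_unitaryGroup_iff, mono_star, mono_mul, ← mono_one]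
  refine mono_congr _ _ _ _ (by simp) fun b => ?_
  exact CharTwo.add_self_eq_zero _

def dot (z b : QV n) : ZMod 2 := ∑ i, z i * b i

theorem dot_add (z a b : QV n) : dot z (a + b) = dot z a + dot z b := by
  simp [dot, mul_add, Finset.sum_add_distrib]

theorem XZ_mono (u z : QV n) : XZGate n u z = mono (Equiv.addRight u) (dot z) := by
  ext a b
  have : dot z b = ((∑ i, (z i).val * (b i).val : ℕ) : ZMod 2) := by
    simp [dot]
  simp only [XZGate, mono, this, chi_nat, Equiv.coe_addRight]

theorem perm_mono (f : QV n ≃ QV n) : permGate n f = mono f (fun _ => 0) := by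
  ext a b
  simp [permGate, mono, chi_zero]

theorem additive_dot (g : QV n → ZMod 2) (hg : ∀ a b, g (a + b) = g a + g b) :
    ∃ z, ∀ b, g b = dot z b := by
  have g0 : g 0 = 0 := by simpa using hg 0 0
  refine ⟨fun i => g (stdBasis n i), fun b => ?_⟩
  have := map_sum (⟨⟨g, g0⟩, hg⟩ : QV n →+ ZMod 2) (fun i => b i • stdBasis n i) Finset.univ
  rw [sum_smul_basis] at this
  refine this.trans (Finset.sum_congr rfl fun i _ => ?_)
  change g (b i • stdBasis n i) = _
  rcases zmod2 (b i) with h0 | h0 <;> simp [h0, g0]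

theorem phase_star {c : ℂ} (hc : c = 1 ∨ c = -1 ∨ c = Complex.I ∨ c = -Complex.I) :
    c * star c = 1 := by
  rcases hc with rfl | rfl | rfl | rfl <;> simp

theorem phase_chi {c : ℂ} (hc : c = 1 ∨ c = -1 ∨ c = Complex.I ∨ c = -Complex.I) (k : ZMod 2) :
    c * chi k = 1 ∨ c * chi k = -1 ∨ c * chi k = Complex.I ∨ c * chi k = -Complex.I := by
  rcases zmod2 k with rfl | rfl
  · simpa [chi] using hc
  · have : chi 1 = -1 := by simp [chi, ZMod.val_one]
    rw [this]
    rcases hc with rfl | rfl | rfl | rfl <;> simp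

theorem conj_mono (s t : QV n ≃ QV n) (q r : QV n → ZMod 2) :
    mono s q * mono t r * star (mono s q) =
      mono ((s.symm.trans t).trans s)
        (fun b => q (s.symm b) + r (s.symm b) + q (t (s.symm b))) := by
  rw [mono_mul, mono_star, mono_mul]
  refine mono_congr _ _ _ _ (by simp) fun b => by ring

theorem smul_unitary {c : ℂ} (hc : c * star c = 1) {U : QMat n}
    (hU : U ∈ Matrix.unitaryGroup (QV n) ℂ) : c • U ∈ Matrix.unitaryGroup (QV n) ℂ := by
  rw [Matrix.mem_unitaryGroup_iff] at *
  rw [star_smul, smul_mul_smul_comm, hU, hc, one_smul]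

theorem mono_clifford {c : ℂ} (hc : c = 1 ∨ c = -1 ∨ c = Complex.I ∨ c = -Complex.I)
    (s : QV n ≃ QV n) (q : QV n → ZMod 2)
    (hs : ∀ u, ∃ u', ∀ y, s (y + u) = s y + u')
    (hq : ∀ u z, ∃ (z' : QV n) (k : ZMod 2), ∀ b,
      q (s.symm b) + dot z (s.symm b) + q (s.symm b + u) = dot z' b + k) :
    c • mono s q ∈ CliffordLevel n 2 := by
  refine ⟨smul_unitary (phase_star hc) (mono_unitary s q), ?_⟩
  rintro P ⟨d, u, z, hd, rfl⟩
  obtain ⟨u', hu'⟩ := hs u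
  obtain ⟨z', k, hk⟩ := hq u z
  refine ⟨d * chi k, u', z', phase_chi hd k, ?_⟩
  rw [star_smul, smul_mul_smul_comm, smul_mul_smul_comm, XZ_mono, XZ_mono, conj_mono]
  have : c * d * star c = d := by rw [mul_right_comm, phase_star hc, one_mul]
  rw [this, mul_smul]
  congr 1
  rw [mono_smul]
  refine mono_congr _ _ _ _ (fun b => ?_) hk
  change s (s.symm b + u) = b + u'
  rw [hu', Equiv.apply_symm_apply]

theorem clifford3 (h : IsDescendingMul n mul) : permGate n (piEquiv h) ∈ CliffordLevel n 3 := by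
  refine ⟨by rw [perm_mono]; exact mono_unitary _ _, ?_⟩
  rintro P ⟨c, u, z, hc, rfl⟩
  rw [Matrix.mul_smul, Matrix.smul_mul, perm_mono, XZ_mono, conj_mono]
  set p := dmPi n mul u with hp
  have hs : ∀ y, (((piEquiv h).symm.trans (Equiv.addRight u)).trans (piEquiv h)) y
      = y + p + mul y p := by
    intro y
    change dmPi n mul (lg h y + u) = _
    rw [pi_add h, pi_lg]
  have hsymm : ∀ y, (((piEquiv h).symm.trans (Equiv.addRight u)).trans (piEquiv h)).symm y
      = y + p + mul y p := by
    intro y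
    rw [Equiv.symm_apply_eq, hs, h.1, h.1, h.2.2.1, mul_self' h, mul_zero' h]
    have h1 := add_self p
    have h2 := add_self (mul y p)
    linear_combination -h1 - h2
  refine mono_clifford hc _ _ ?_ ?_
  · intro u'
    refine ⟨u' + mul u' p, fun y => ?_⟩
    rw [hs, hs, h.1]; abel
  · intro u' z'
    let L : QV n → QV n := fun b => b + mul b p
    have hL : ∀ a b, L (a + b) = L a + L b := by
      intro a b; simp only [L, h.1]; abel
    obtain ⟨z'', hz''⟩ := additive_dot
      (fun b => dot z' (L b) + dot z (lg h (mul u' (L b)))) (by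
        intro a b
        simp only [hL, lg_add_mul h, dot_add]; abel)
    refine ⟨z'', dot z' p + dot z (lg h u') + dot z (lg h (mul u' p)), fun b => ?_⟩
    rw [hsymm, ← hz'']
    have e : b + p + mul b p = L b + p := by simp only [L]; abel
    rw [e]
    change (0 + dot z (lg h (L b + p)) + 0) + dot z' (L b + p) +
      (0 + dot z (lg h (L b + p + u')) + 0) = _
    rw [lg_add h (L b + p) u', h.2.2.2.1 (L b + p) u', lg_add_mul h]
    simp only [dot_add]
    generalize dot z (lg h (L b + p)) = A
    have hA : A + A = 0 := CharTwo.add_self_eq_zero _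
    linear_combination hA

end DM

/-- For any descending multiplication on `𝔽₂ⁿ`, the map
`π(∑_{i∈S} eᵢ) = ∑_{∅≠T⊆S} ∏_{i∈T} eᵢ` is a bijection of `𝔽₂ⁿ`, and the
corresponding permutation gate is in staircase form and lies in `𝒞₃`. -/
theorem stmt1 (n : ℕ) (hn : 1 ≤ n) (mul : QV n → QV n → QV n)
    (hmul : IsDescendingMul n mul) :
    ∃ f : QV n ≃ QV n,
      dmPiSpec n mul ⇑f ∧
      IsStaircase n ⇑f ∧
      permGate n f ∈ CliffordLevel n 3 := by
  exact ⟨DM.piEquiv hmul, DM.dmPi_spec, DM.staircase hmul, DM.clifford3 hmul⟩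
end

section
/- For every integer k ≥ 3, the permutation gate U_k on n = 2ᵏ−1 qubits lies in 𝒞₃, but its inverse U_k⁻¹ does not lie in 𝒞ₖ. Consequently U_k is not semi-Clifford. -/
/-! ### The algebra -/

/-- Basis vector labelled by a bitmask `x` (zero when out of range). -/
def ukE (k x : ℕ) : QV (2 ^ k - 1) :=
  if h : 1 ≤ x ∧ x < 2 ^ k then stdBasis (2 ^ k - 1) ⟨x - 1, by omega⟩ else 0

theorem ukE_succ (k : ℕ) (a : Fin (2 ^ k - 1)) :
    ukE k (a.val + 1) = stdBasis (2 ^ k - 1) a := by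
  have := a.isLt
  unfold ukE
  rw [dif_pos (by omega)]
  congr 1

theorem ukBasisMul_eq (k : ℕ) (a b : Fin (2 ^ k - 1)) :
    ukBasisMul k a b =
      if (a.val + 1) &&& (b.val + 1) = 0 then ukE k (a.val + 1 + (b.val + 1)) else 0 := by
  unfold ukBasisMul ukE
  split_ifs with h1 h2 h3 h3
  · congr 2
    omega
  · omega
  · omega
  · rfl
  · rfl

theorem ukMul_add_left (k : ℕ) (u v w : QV (2 ^ k - 1)) :
    ukMul k (u + v) w = ukMul k u w + ukMul k v w := by
  simp only [ukMul, Pi.add_apply, add_mul, add_smul, Finset.sum_add_distrib]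

theorem ukMul_add_right (k : ℕ) (u v w : QV (2 ^ k - 1)) :
    ukMul k u (v + w) = ukMul k u v + ukMul k u w := by
  simp only [ukMul, Pi.add_apply, mul_add, add_smul, Finset.sum_add_distrib]

theorem ukMul_smul_left (k : ℕ) (c : ZMod 2) (u w : QV (2 ^ k - 1)) :
    ukMul k (c • u) w = c • ukMul k u w := by
  simp only [ukMul, Pi.smul_apply, Finset.smul_sum, smul_smul, smul_eq_mul, mul_assoc]

theorem ukMul_smul_right (k : ℕ) (c : ZMod 2) (u w : QV (2 ^ k - 1)) :
    ukMul k u (c • w) = c • ukMul k u w := by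
  simp only [ukMul, Pi.smul_apply, Finset.smul_sum, smul_smul, smul_eq_mul, mul_left_comm]

/-- `ukMul` as a bilinear map. -/
def ukBil (k : ℕ) : QV (2 ^ k - 1) →ₗ[ZMod 2] QV (2 ^ k - 1) →ₗ[ZMod 2] QV (2 ^ k - 1) :=
  LinearMap.mk₂ (ZMod 2) (ukMul k) (ukMul_add_left k) (ukMul_smul_left k)
    (ukMul_add_right k) (ukMul_smul_right k)

theorem ukMul_zero_left (k : ℕ) (w : QV (2 ^ k - 1)) : ukMul k 0 w = 0 := by
  simp [ukMul]

theorem ukMul_zero_right (k : ℕ) (w : QV (2 ^ k - 1)) : ukMul k w 0 = 0 := by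
  simp [ukMul]

theorem ukMul_basis (k : ℕ) (a b : Fin (2 ^ k - 1)) :
    ukMul k (stdBasis _ a) (stdBasis _ b) = ukBasisMul k a b := by
  unfold ukMul
  rw [Finset.sum_eq_single a, Finset.sum_eq_single b]
  · simp [stdBasis]
  · intro c _ hc
    simp [stdBasis, hc]
  · simp
  · intro c _ hc
    simp [stdBasis, hc]
  · simp

theorem ukMul_E (k x y : ℕ) (hx : x ≠ 0) (hy : y ≠ 0) :
    ukMul k (ukE k x) (ukE k y) = if x &&& y = 0 then ukE k (x + y) else 0 := by
  by_cases hx2 : x < 2 ^ k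
  · by_cases hy2 : y < 2 ^ k
    · obtain ⟨a, rfl⟩ : ∃ a : Fin (2 ^ k - 1), x = a.val + 1 :=
        ⟨⟨x - 1, by omega⟩, by simp; omega⟩
      obtain ⟨b, rfl⟩ : ∃ a : Fin (2 ^ k - 1), y = a.val + 1 :=
        ⟨⟨y - 1, by omega⟩, by simp; omega⟩
      rw [ukE_succ, ukE_succ, ukMul_basis, ukBasisMul_eq]
    · have h1 : ukE k y = 0 := by unfold ukE; rw [dif_neg (by omega)]
      have h2 : ukE k (x + y) = 0 := by unfold ukE; rw [dif_neg (by omega)]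
      simp [h1, h2, ukMul_zero_right]
  · have h1 : ukE k x = 0 := by unfold ukE; rw [dif_neg (by omega)]
    have h2 : ukE k (x + y) = 0 := by unfold ukE; rw [dif_neg (by omega)]
    simp [h1, h2, ukMul_zero_left]

theorem vec_eq_sum (n : ℕ) (v : QV n) : v = ∑ i, v i • stdBasis n i := by
  funext m
  simp [stdBasis, Finset.sum_apply]

theorem ukMul_comm (k : ℕ) (u v : QV (2 ^ k - 1)) : ukMul k u v = ukMul k v u := by
  unfold ukMul
  rw [Finset.sum_comm]
  refine Finset.sum_congr rfl fun a _ => Finset.sum_congr rfl fun b _ => ?_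
  rw [ukBasisMul_eq, ukBasisMul_eq, Nat.land_comm, Nat.add_comm (a.val + 1), mul_comm]

theorem land_add_zero (x y z : ℕ) (h : x &&& y = 0) :
    ((x + y) &&& z = 0) ↔ (x &&& z = 0 ∧ y &&& z = 0) := by
  have h1 : x + y = x ||| y := by
    have hlt : x + y < 2 ^ (x + y) := Nat.lt_two_pow_self
    have h2 := BitVec.add_eq_or_of_and_eq_zero (BitVec.ofNat (x + y) x) (BitVec.ofNat (x + y) y)
      (by
        rw [← BitVec.ofNat_and, h])
    have h3 := congrArg BitVec.toNat h2
    rw [BitVec.toNat_add, BitVec.toNat_or, BitVec.toNat_ofNat, BitVec.toNat_ofNat,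
      Nat.mod_eq_of_lt (show x < 2 ^ (x + y) by omega),
      Nat.mod_eq_of_lt (show y < 2 ^ (x + y) by omega), Nat.mod_eq_of_lt hlt] at h3
    exact h3
  rw [h1, Nat.and_or_distrib_right]
  exact Nat.or_eq_zero_iff

theorem ukMul_assoc_basis (k : ℕ) (a b c : Fin (2 ^ k - 1)) :
    ukMul k (ukMul k (stdBasis _ a) (stdBasis _ b)) (stdBasis _ c) =
      ukMul k (stdBasis _ a) (ukMul k (stdBasis _ b) (stdBasis _ c)) := by
  rw [← ukE_succ, ← ukE_succ, ← ukE_succ, ukMul_E _ _ _ (by omega) (by omega),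
    ukMul_E _ _ _ (by omega) (by omega)]
  generalize ha : a.val + 1 = x
  generalize hb : b.val + 1 = y
  generalize hc : c.val + 1 = z
  by_cases h1 : x &&& y = 0
  · rw [if_pos h1, ukMul_E _ _ _ (by omega) (by omega)]
    by_cases h2 : y &&& z = 0
    · rw [if_pos h2, ukMul_E _ _ _ (by omega) (by omega)]
      have h3 := land_add_zero x y z h1
      have h4 := land_add_zero y z x h2
      rw [Nat.land_comm _ x, Nat.land_comm _ x, Nat.land_comm _ x] at h4
      by_cases h5 : x &&& z = 0
      · rw [if_pos (h3.2 ⟨h5, h2⟩), if_pos (h4.2 ⟨h1, h5⟩), add_assoc]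
      · rw [if_neg (fun h => h5 (h3.1 h).1), if_neg (fun h => h5 (h4.1 h).2)]
    · rw [if_neg h2, ukMul_zero_right, if_neg (fun h => h2 ((land_add_zero x y z h1).1 h).2)]
  · rw [if_neg h1, ukMul_zero_left]
    by_cases h2 : y &&& z = 0
    · rw [if_pos h2, ukMul_E _ _ _ (by omega) (by omega)]
      have h4 := land_add_zero y z x h2
      rw [Nat.land_comm _ x, Nat.land_comm _ x, Nat.land_comm _ x] at h4
      rw [if_neg (fun h => h1 (h4.1 h).1)]
    · rw [if_neg h2, ukMul_zero_right]

theorem ukMul_assoc (k : ℕ) (u v w : QV (2 ^ k - 1)) :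
    ukMul k (ukMul k u v) w = ukMul k u (ukMul k v w) := by
  change ukBil k (ukBil k u v) w = ukBil k u (ukBil k v w)
  rw [vec_eq_sum _ u, vec_eq_sum _ v, vec_eq_sum _ w]
  simp only [map_sum, LinearMap.sum_apply, map_smul, LinearMap.smul_apply]
  have h : ∀ a b c : Fin (2 ^ k - 1),
      ukBil k (ukBil k (stdBasis _ a) (stdBasis _ b)) (stdBasis _ c) =
      ukBil k (stdBasis _ a) (ukBil k (stdBasis _ b) (stdBasis _ c)) := ukMul_assoc_basis k
  simp only [h]

theorem ukMul_basis_sq (k : ℕ) (a : Fin (2 ^ k - 1)) :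
    ukMul k (stdBasis _ a) (stdBasis _ a) = 0 := by
  rw [ukMul_basis, ukBasisMul_eq, if_neg (by simp)]

/-- `w` vanishes below `t`. -/
def VanishBelow (n t : ℕ) (w : QV n) : Prop := ∀ m : Fin n, m.val < t → w m = 0

theorem ukMul_vanish (k t : ℕ) (u w : QV (2 ^ k - 1)) (hw : VanishBelow _ t w) :
    VanishBelow _ (t + 1) (ukMul k u w) := by
  intro m hm
  unfold ukMul
  rw [Finset.sum_apply]
  refine Finset.sum_eq_zero fun a _ => ?_
  rw [Finset.sum_apply]
  refine Finset.sum_eq_zero fun b _ => ?_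
  by_cases hb : b.val < t
  · simp [hw b hb]
  · rw [Pi.smul_apply]
    have : ukBasisMul k a b m = 0 := by
      unfold ukBasisMul
      split_ifs with h1 h2
      · unfold stdBasis
        rw [if_neg]
        intro h
        rw [h] at hm
        simp at hm
        omega
      · rfl
      · rfl
    rw [this, smul_zero]

theorem qv_add_self (n : ℕ) (v : QV n) : v + v = 0 := by
  funext i
  exact CharTwo.add_self_eq_zero (v i)

/-- The algebra as a type synonym. -/
def UA (k : ℕ) : Type := QV (2 ^ k - 1)

instance (k : ℕ) : NonUnitalCommRing (UA k) :=
  { (inferInstanceAs (AddCommGroup (QV (2 ^ k - 1))) : AddCommGroup (UA k)) with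
    mul := ukMul k
    left_distrib := ukMul_add_right k
    right_distrib := ukMul_add_left k
    zero_mul := ukMul_zero_left k
    mul_zero := ukMul_zero_right k
    mul_assoc := ukMul_assoc k
    mul_comm := ukMul_comm k }

/-- The unitization. -/
def UR (k : ℕ) : Type := Unitization ℤ (UA k)

instance (k : ℕ) : CommRing (UR k) := inferInstanceAs (CommRing (Unitization ℤ (UA k)))

/-- Inclusion into the unitization. -/
def ukI (k : ℕ) (v : QV (2 ^ k - 1)) : UR k :=
  Unitization.inr (R := ℤ) (A := UA k) v

/-- The scalar part. -/
def ukFst (k : ℕ) : UR k →+* ℤ :=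
  (Unitization.fstHom ℤ (UA k)).toRingHom

/-- The vector part. -/
def ukSnd (k : ℕ) (x : UR k) : QV (2 ^ k - 1) := (Unitization.toProd (R := ℤ) (A := UA k) x).2

theorem ukFst_I (k : ℕ) (v : QV (2 ^ k - 1)) : ukFst k (ukI k v) = 0 :=
  Unitization.fst_inr ℤ (A := UA k) v

theorem ukSnd_one_add (k : ℕ) (v : QV (2 ^ k - 1)) : ukSnd k (1 + ukI k v) = v :=
  zero_add (M := UA k) v

theorem ur_ext (k : ℕ) (x y : UR k) (h1 : ukFst k x = ukFst k y) (h2 : ukSnd k x = ukSnd k y) :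
    x = y := Unitization.ext (R := ℤ) (A := UA k) h1 h2

theorem ukI_mul (k : ℕ) (u v : QV (2 ^ k - 1)) : ukI k (ukMul k u v) = ukI k u * ukI k v :=
  Unitization.inr_mul ℤ (A := UA k) u v

theorem ukI_add (k : ℕ) (u v : QV (2 ^ k - 1)) : ukI k (u + v) = ukI k u + ukI k v :=
  Unitization.inr_add ℤ (A := UA k) u v

theorem ukI_zero (k : ℕ) : ukI k 0 = 0 := Unitization.inr_zero ℤ (A := UA k)

theorem ukI_inj (k : ℕ) (u v : QV (2 ^ k - 1)) (h : ukI k u = ukI k v) : u = v :=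
  Unitization.inr_injective (R := ℤ) (A := UA k) h

/-- The product `∏ (1 + vᵢ eᵢ)`. -/
noncomputable def ukP (k : ℕ) (v : QV (2 ^ k - 1)) : UR k :=
  ∏ i, (1 + ukI k (v i • stdBasis _ i))

/-- The map `U_k`. -/
noncomputable def ukF (k : ℕ) (v : QV (2 ^ k - 1)) : QV (2 ^ k - 1) := ukSnd k (ukP k v)

theorem ukP_eq (k : ℕ) (v : QV (2 ^ k - 1)) : ukP k v = 1 + ukI k (ukF k v) := by
  apply ur_ext
  · unfold ukP
    rw [map_prod, map_add, ukFst_I, map_one, add_zero]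
    refine Finset.prod_eq_one fun i _ => ?_
    rw [map_add, ukFst_I, map_one, add_zero]
  · rw [ukSnd_one_add, ukF]

theorem ukP_add (k : ℕ) (u v : QV (2 ^ k - 1)) : ukP k (u + v) = ukP k u * ukP k v := by
  unfold ukP
  rw [← Finset.prod_mul_distrib]
  refine Finset.prod_congr rfl fun i _ => ?_
  have h : ukI k (u i • stdBasis _ i) * ukI k (v i • stdBasis _ i) = 0 := by
    rw [← ukI_mul, ukMul_smul_left, ukMul_smul_right, ukMul_basis_sq, smul_zero, smul_zero,
      ukI_zero]
  rw [Pi.add_apply, add_smul, ukI_add]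
  linear_combination -h

theorem ukF_add (k : ℕ) (u v : QV (2 ^ k - 1)) :
    ukF k (u + v) = ukF k u + ukF k v + ukMul k (ukF k u) (ukF k v) := by
  apply ukI_inj
  have h := ukP_add k u v
  rw [ukP_eq, ukP_eq, ukP_eq] at h
  rw [ukI_add, ukI_add, ukI_mul]
  linear_combination h

theorem ukP_basis (k : ℕ) (i : Fin (2 ^ k - 1)) :
    ukP k (stdBasis _ i) = 1 + ukI k (stdBasis _ i) := by
  unfold ukP
  rw [Finset.prod_eq_single i]
  · simp [stdBasis]
  · intro j _ hj
    simp [stdBasis, hj, ukI_zero]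
  · simp

theorem ukF_basis (k : ℕ) (i : Fin (2 ^ k - 1)) : ukF k (stdBasis _ i) = stdBasis _ i := by
  apply ukI_inj
  have h := ukP_basis k i
  rw [ukP_eq] at h
  exact add_left_cancel h

theorem ukP_zero (k : ℕ) : ukP k 0 = 1 := by
  unfold ukP
  simp [ukI_zero]

theorem ukF_zero (k : ℕ) : ukF k 0 = 0 := by
  apply ukI_inj
  have h := ukP_zero k
  rw [ukP_eq] at h
  rw [ukI_zero]
  linear_combination h

theorem ukF_smul_basis (k : ℕ) (c : ZMod 2) (i : Fin (2 ^ k - 1)) :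
    ukF k (c • stdBasis _ i) = c • stdBasis _ i := by
  have : c = 0 ∨ c = 1 := by revert c; decide
  rcases this with rfl | rfl
  · simp [ukF_zero]
  · simp [ukF_basis]

theorem ukI_dmProdList (k : ℕ) (l : List (Fin (2 ^ k - 1))) (hl : l ≠ []) :
    ukI k (dmProdList _ (ukMul k) l) = (l.map fun i => ukI k (stdBasis _ i)).prod := by
  induction l with
  | nil => exact absurd rfl hl
  | cons i l ih =>
    cases l with
    | nil => simp [dmProdList]
    | cons j l =>
      rw [dmProdList, ukI_mul, ih (by simp), List.map_cons (a := i), List.prod_cons]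

theorem ukI_dmProd (k : ℕ) (T : Finset (Fin (2 ^ k - 1))) (hT : T ≠ ∅) :
    ukI k (dmProd _ (ukMul k) T) = ∏ i ∈ T, ukI k (stdBasis _ i) := by
  unfold dmProd
  rw [ukI_dmProdList]
  · rw [← Finset.prod_map_toList T (fun i => ukI k (stdBasis _ i))]
    exact ((Finset.sort_perm_toList T (· ≤ ·)).map _).prod_eq
  · intro h
    apply hT
    have := congrArg List.length h
    simpa using this

theorem ukF_spec (k : ℕ) : dmPiSpec (2 ^ k - 1) (ukMul k) (ukF k) := by
  intro S
  apply ukI_inj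
  have h1 : ukP k (∑ i ∈ S, stdBasis _ i) = ∏ i ∈ S, (1 + ukI k (stdBasis _ i)) := by
    induction S using Finset.induction_on with
    | empty => simp [ukP_zero]
    | insert a s ha ih =>
      rw [Finset.sum_insert ha, Finset.prod_insert ha, ukP_add, ih, ukP_basis]
  rw [ukP_eq, Finset.prod_one_add, ← Finset.add_sum_erase _ _ (Finset.empty_mem_powerset S),
    Finset.prod_empty] at h1
  rw [add_left_cancel h1]
  have h2 : ∀ s : Finset (Finset (Fin (2 ^ k - 1))),
      ukI k (∑ T ∈ s, dmProd _ (ukMul k) T) = ∑ T ∈ s, ukI k (dmProd _ (ukMul k) T) := by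
    intro s
    induction s using Finset.induction_on with
    | empty => simp [ukI_zero]
    | insert a s ha ih => rw [Finset.sum_insert ha, Finset.sum_insert ha, ukI_add, ih]
  rw [h2]
  refine Finset.sum_congr rfl fun T hT => ?_
  rw [ukI_dmProd _ _ (Finset.ne_of_mem_erase hT)]

theorem ukF_sq (k : ℕ) (v : QV (2 ^ k - 1)) : ukMul k (ukF k v) (ukF k v) = 0 := by
  have h := ukF_add k v v
  rw [qv_add_self, qv_add_self, ukF_zero, zero_add] at h
  exact h.symm

theorem ukF_vanish (k t : ℕ) (v : QV (2 ^ k - 1)) (hv : VanishBelow _ t v) :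
    VanishBelow _ (t + 1) (ukF k v + v) := by
  have key : ∀ S : Finset (Fin (2 ^ k - 1)),
      VanishBelow _ t (∑ i ∈ S, v i • stdBasis (2 ^ k - 1) i) ∧
      VanishBelow _ (t + 1) (ukF k (∑ i ∈ S, v i • stdBasis _ i) +
        ∑ i ∈ S, v i • stdBasis _ i) := by
    intro S
    induction S using Finset.induction_on with
    | empty =>
      constructor
      · intro m _
        simp
      · intro m _
        simp [ukF_zero]
    | insert a s ha ih =>
      obtain ⟨ih1, ih2⟩ := ih
      rw [Finset.sum_insert ha, ukF_add, ukF_smul_basis]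
      set w := ∑ i ∈ s, v i • stdBasis (2 ^ k - 1) i
      constructor
      · intro m hm
        rw [Pi.add_apply, ih1 m hm, add_zero, Pi.smul_apply]
        unfold stdBasis
        split_ifs with h
        · rw [← h, hv m hm, zero_smul]
        · simp
      · have h3 : VanishBelow _ t (ukF k w) := by
          intro m hm
          have h4 := ih2 m (by omega)
          rw [Pi.add_apply, ih1 m hm, add_zero] at h4
          exact h4
        intro m hm
        have h5 := ukMul_vanish k t (v a • stdBasis _ a) _ h3 m hm
        have h6 := ih2 m hm
        have h7 := congrFun (qv_add_self _ (v a • stdBasis _ a)) m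
        simp only [Pi.add_apply, Pi.zero_apply] at h5 h6 h7 ⊢
        linear_combination h5 + h6 + h7
  have := (key Finset.univ).2
  rwa [← vec_eq_sum] at this

theorem ukF_kernel (k : ℕ) (v : QV (2 ^ k - 1)) (hv : ukF k v = 0) : v = 0 := by
  have key : ∀ t, VanishBelow _ t v := by
    intro t
    induction t with
    | zero => intro m hm; omega
    | succ t ih =>
      have := ukF_vanish k t v ih
      rwa [hv, zero_add] at this
  funext m
  exact key (m.val + 1) m (by omega)

theorem ukF_bij (k : ℕ) : Function.Bijective (ukF k) := by
  rw [← Finite.injective_iff_bijective]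
  intro u v h
  have h1 : ukF k (u + v) = 0 := by
    rw [ukF_add, h, ukF_sq, qv_add_self, zero_add]
  have h2 := ukF_kernel k _ h1
  have h3 := qv_add_self _ v
  exact add_right_cancel (h2.trans h3.symm)

/-- The permutation `U_k`. -/
noncomputable def ukEquiv (k : ℕ) : QV (2 ^ k - 1) ≃ QV (2 ^ k - 1) :=
  Equiv.ofBijective (ukF k) (ukF_bij k)

theorem ukEquiv_add (k : ℕ) (u v : QV (2 ^ k - 1)) :
    ukEquiv k (u + v) = ukEquiv k u + ukEquiv k v + ukMul k (ukEquiv k u) (ukEquiv k v) :=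
  ukF_add k u v

theorem ukMul_sq (k : ℕ) (v : QV (2 ^ k - 1)) : ukMul k v v = 0 := by
  obtain ⟨u, rfl⟩ := (ukF_bij k).2 v
  exact ukF_sq k u

theorem ukG_circ (k : ℕ) (a b : QV (2 ^ k - 1)) :
    (ukEquiv k).symm (a + b + ukMul k a b) = (ukEquiv k).symm a + (ukEquiv k).symm b := by
  rw [Equiv.symm_apply_eq, ukEquiv_add, Equiv.apply_symm_apply, Equiv.apply_symm_apply]

theorem ukG_zero (k : ℕ) : (ukEquiv k).symm 0 = 0 := by
  rw [Equiv.symm_apply_eq]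
  exact (ukF_zero k).symm

theorem ukG_add (k : ℕ) (a b : QV (2 ^ k - 1)) :
    (ukEquiv k).symm (a + b) =
      (ukEquiv k).symm a + (ukEquiv k).symm b + (ukEquiv k).symm (ukMul k a b) := by
  have h := ukG_circ k (a + b) (ukMul k a b)
  rw [ukMul_add_left, ← ukMul_assoc, ukMul_sq, ukMul_zero_left, ukMul_comm k a b, ← ukMul_assoc,
    ukMul_sq, ukMul_zero_left, zero_add, add_zero, ukMul_comm k b a, ukG_circ] at h
  rw [h, add_assoc, qv_add_self, add_zero]

theorem ukG_mul_add (k : ℕ) (x y s : QV (2 ^ k - 1)) :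
    (ukEquiv k).symm (ukMul k (x + y) s) =
      (ukEquiv k).symm (ukMul k x s) + (ukEquiv k).symm (ukMul k y s) := by
  rw [ukMul_add_left, ukG_add, ukMul_comm k y s, ukMul_assoc, ← ukMul_assoc k s, ukMul_sq,
    ukMul_zero_left, ukMul_zero_right, ukG_zero, add_zero]

/-! ### Monomial gates -/

/-- The monomial gate `|b⟩ ↦ φ b |π b⟩`. -/
def mono (n : ℕ) (π : QV n ≃ QV n) (φ : QV n → ℂ) : QMat n :=
  fun a b => if a = π b then φ b else 0

theorem mono_mul (n : ℕ) (π ρ : QV n ≃ QV n) (φ ψ : QV n → ℂ) :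
    mono n π φ * mono n ρ ψ = mono n (ρ.trans π) (fun b => φ (ρ b) * ψ b) := by
  ext a b
  rw [Matrix.mul_apply, Finset.sum_eq_single (ρ b)]
  · by_cases h : a = π (ρ b) <;> simp [mono, h]
  · intro c _ hc
    simp [mono, hc]
  · simp

theorem mono_star (n : ℕ) (π : QV n ≃ QV n) (φ : QV n → ℂ) :
    star (mono n π φ) = mono n π.symm (fun a => star (φ (π.symm a))) := by
  ext a b
  rw [Matrix.star_apply]
  unfold mono
  by_cases h : b = π a
  · subst h
    simp
  · have h2 : a ≠ π.symm b := fun h3 => h (by rw [h3, Equiv.apply_symm_apply])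
    simp [h, h2]

theorem mono_congr (n : ℕ) (π ρ : QV n ≃ QV n) (φ ψ : QV n → ℂ) (h1 : ∀ x, π x = ρ x)
    (h2 : ∀ x, φ x = ψ x) : mono n π φ = mono n ρ ψ := by
  rw [Equiv.ext h1, funext h2]

theorem mono_smul (n : ℕ) (c : ℂ) (π : QV n ≃ QV n) (φ : QV n → ℂ) :
    c • mono n π φ = mono n π (fun b => c * φ b) := by
  ext a b
  simp [mono]

theorem mono_inj_phase (n : ℕ) (π ρ : QV n ≃ QV n) (φ ψ : QV n → ℂ)
    (h : mono n π φ = mono n ρ ψ) (hφ : ∀ x, φ x ≠ 0) : (∀ x, φ x = ψ x) := by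
  intro x
  have h1 := congrFun (congrFun h (π x)) x
  simp only [mono, if_true] at h1
  split_ifs at h1 with h2
  · exact h1
  · exact absurd h1 (hφ x)

theorem mono_one (n : ℕ) : (1 : QMat n) = mono n (Equiv.refl _) (fun _ => 1) := by
  ext a b
  by_cases h : a = b <;> simp [mono, Matrix.one_apply, h]

theorem mono_conj (n : ℕ) (π ρ : QV n ≃ QV n) (φ ψ : QV n → ℂ) :
    mono n π φ * mono n ρ ψ * star (mono n π φ) =
      mono n ((π.symm.trans ρ).trans π)
        (fun v => φ (ρ (π.symm v)) * ψ (π.symm v) * star (φ (π.symm v))) := by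
  rw [mono_star, mono_mul, mono_mul]
  rfl

theorem mono_unitary (n : ℕ) (π : QV n ≃ QV n) (φ : QV n → ℂ) (h : ∀ x, φ x * star (φ x) = 1) :
    mono n π φ ∈ Matrix.unitaryGroup (QV n) ℂ := by
  rw [Matrix.mem_unitaryGroup_iff, mono_star, mono_mul, mono_one]
  apply mono_congr
  · intro x
    simp
  · intro x
    exact h _

/-- The sign character. -/
noncomputable def chi (x : ZMod 2) : ℂ := (-1) ^ x.val

theorem z2_cases (x : ZMod 2) : x = 0 ∨ x = 1 := by
  revert x
  decide

theorem chi_zero : chi 0 = 1 := by simp [chi]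

theorem chi_one : chi 1 = -1 := by
  simp [chi, ZMod.val_one]

theorem chi_add (x y : ZMod 2) : chi (x + y) = chi x * chi y := by
  have h2 : (1 : ZMod 2) + 1 = 0 := by decide
  rcases z2_cases x with rfl | rfl <;> rcases z2_cases y with rfl | rfl <;>
    simp [chi_zero, chi_one, h2]

theorem chi_sq (x : ZMod 2) : chi x * chi x = 1 := by
  rw [← chi_add, CharTwo.add_self_eq_zero, chi_zero]

theorem chi_star (x : ZMod 2) : star (chi x) = chi x := by
  rcases z2_cases x with rfl | rfl <;> simp [chi_zero, chi_one]

theorem chi_ne (x : ZMod 2) : chi x ≠ 0 := by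
  intro h
  have := chi_sq x
  rw [h] at this
  simp at this

theorem chi_inj (x y : ZMod 2) (h : chi x = chi y) : x = y := by
  rcases z2_cases x with rfl | rfl <;> rcases z2_cases y with rfl | rfl <;>
    simp only [chi_zero, chi_one] at h ⊢ <;> norm_num at h

theorem chi_cast (m : ℕ) : (-1 : ℂ) ^ m = chi (m : ZMod 2) := by
  induction m with
  | zero => simp [chi_zero]
  | succ m ih => rw [pow_succ, Nat.cast_succ, chi_add, ih, chi_one]

/-- Dot product. -/
def qdot (n : ℕ) (z b : QV n) : ZMod 2 := ∑ i, z i * b i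

theorem qdot_add (n : ℕ) (z a b : QV n) : qdot n z (a + b) = qdot n z a + qdot n z b := by
  simp only [qdot, Pi.add_apply, mul_add, Finset.sum_add_distrib]

theorem qdot_zero (n : ℕ) (z : QV n) : qdot n z 0 = 0 := by
  simp [qdot]

theorem qdot_basis (n : ℕ) (i : Fin n) (b : QV n) : qdot n (stdBasis n i) b = b i := by
  simp [qdot, stdBasis]

theorem XZ_eq (n : ℕ) (u z : QV n) :
    XZGate n u z = mono n (Equiv.addRight u) (fun b => chi (qdot n z b)) := by
  ext a b
  unfold XZGate mono
  rw [chi_cast]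
  by_cases h : a = b + u <;> simp [qdot, h]

theorem perm_eq (n : ℕ) (f : QV n ≃ QV n) : permGate n f = mono n f (fun _ => 1) := rfl

/-- The allowed phases. -/
def IsPh (c : ℂ) : Prop := c = 1 ∨ c = -1 ∨ c = Complex.I ∨ c = -Complex.I

theorem IsPh.norm {c : ℂ} (h : IsPh c) : c * star c = 1 := by
  rcases h with rfl | rfl | rfl | rfl <;> simp

theorem IsPh.star {c : ℂ} (h : IsPh c) : IsPh (star c) := by
  rcases h with rfl | rfl | rfl | rfl <;> simp [IsPh]

theorem IsPh.chi_mul {c : ℂ} (h : IsPh c) (x : ZMod 2) : IsPh (c * chi x) := by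
  rcases z2_cases x with rfl | rfl <;> rcases h with rfl | rfl | rfl | rfl <;>
    simp [IsPh, chi_zero, chi_one]

theorem mem_pauli (n : ℕ) (P : QMat n) :
    P ∈ PauliGroup n ↔ ∃ (c : ℂ) (u z : QV n), IsPh c ∧
      P = mono n (Equiv.addRight u) (fun b => c * chi (qdot n z b)) := by
  unfold PauliGroup
  simp only [Set.mem_ofPred_eq, XZ_eq, mono_smul]
  rfl

theorem chi_ph_norm (c : ℂ) (hc : IsPh c) (x : ZMod 2) : c * chi x * star (c * chi x) = 1 :=
  (hc.chi_mul x).norm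

theorem pauli_unitary (n : ℕ) (P : QMat n) (hP : P ∈ PauliGroup n) :
    P ∈ Matrix.unitaryGroup (QV n) ℂ := by
  obtain ⟨c, u, z, hc, rfl⟩ := (mem_pauli n P).1 hP
  exact mono_unitary _ _ _ fun x => chi_ph_norm c hc _

/-- Affine functions. -/
def Aff (n : ℕ) (h : QV n → ZMod 2) : Prop := ∀ x y, h (x + y) = h x + h y + h 0

theorem Aff.eq_dot {n : ℕ} {h : QV n → ZMod 2} (hh : Aff n h) :
    ∃ z, ∀ v, h v = h 0 + qdot n z v := by
  let L : QV n →+ ZMod 2 :=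
    { toFun := fun v => h v + h 0
      map_zero' := CharTwo.add_self_eq_zero _
      map_add' := fun x y => by
        rw [hh x y]
        ring }
  refine ⟨fun i => L (stdBasis n i), fun v => ?_⟩
  have h1 : L v = qdot n (fun i => L (stdBasis n i)) v := by
    conv_lhs => rw [vec_eq_sum n v]
    rw [map_sum]
    refine Finset.sum_congr rfl fun i _ => ?_
    rcases z2_cases (v i) with h | h <;> simp [h]
  rw [← h1]
  change h v = h 0 + (h v + h 0)
  have := CharTwo.add_self_eq_zero (h 0)
  linear_combination -this

/-- Clifford criterion for monomial gates. -/
theorem mono_clifford (n : ℕ) (π : QV n ≃ QV n) (L : QV n → QV n)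
    (hπ : ∀ x s, π (x + s) = π x + L s) (hπ' : ∀ x y, π.symm (x + y) = π.symm x + π.symm y + π.symm 0)
    (c : ℂ) (hc : IsPh c) (q : QV n → ZMod 2)
    (hq : ∀ s, Aff n (fun x => q (x + s) + q x)) :
    mono n π (fun b => c * chi (q b)) ∈ CliffordLevel n 2 := by
  refine ⟨mono_unitary _ _ _ fun x => chi_ph_norm c hc _, fun P hP => ?_⟩
  obtain ⟨d, u, z, hd, rfl⟩ := (mem_pauli n P).1 hP
  rw [mono_conj]
  change _ ∈ PauliGroup n
  rw [mem_pauli]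
  have haff : Aff n (fun v => q (π.symm v + u) + q (π.symm v) + qdot n z (π.symm v)) := by
    intro x y
    have h1 := hq u (π.symm x + π.symm y) (π.symm 0)
    have h2 := hq u (π.symm x) (π.symm y)
    have h0 := CharTwo.add_self_eq_zero (q (0 + u) + q 0)
    simp only at h1 h2
    simp only [hπ' x y, qdot_add]
    linear_combination h1 + h2 + h0
  obtain ⟨z', hz'⟩ := haff.eq_dot
  refine ⟨d * chi (q (π.symm 0 + u) + q (π.symm 0) + qdot n z (π.symm 0)), L u, z',
    hd.chi_mul _, ?_⟩
  apply mono_congr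
  · intro v
    simp [hπ]
  · intro v
    rw [mul_assoc d, ← chi_add, ← hz' v, star_mul', chi_star, chi_add, chi_add]
    have h3 := hc.norm
    simp only [Equiv.coe_addRight]
    linear_combination (d * chi (q (π.symm v + u)) * chi (q (π.symm v)) * chi (qdot n z (π.symm v))) * h3

/-! ### Closure properties of the hierarchy -/

theorem pauli_finite (n : ℕ) : (PauliGroup n).Finite := by
  have : PauliGroup n ⊆ (fun p : ℂ × QV n × QV n => p.1 • XZGate n p.2.1 p.2.2) ''
      (({1, -1, Complex.I, -Complex.I} : Set ℂ) ×ˢ (Set.univ : Set (QV n × QV n))) := by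
    rintro P ⟨c, u, z, hc, rfl⟩
    refine ⟨(c, u, z), ⟨?_, Set.mem_univ _⟩, rfl⟩
    simpa using hc
  refine Set.Finite.subset (Set.Finite.image _ (Set.Finite.prod ?_ Set.finite_univ)) this
  exact Set.toFinite _

theorem star_mul_self' {n : ℕ} {U : QMat n} (h : U ∈ Matrix.unitaryGroup (QV n) ℂ) :
    star U * U = 1 := Matrix.mem_unitaryGroup_iff'.1 h

theorem mul_star_self' {n : ℕ} {U : QMat n} (h : U ∈ Matrix.unitaryGroup (QV n) ℂ) :
    U * star U = 1 := Matrix.mem_unitaryGroup_iff.1 h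

theorem clifford_star_conj (n : ℕ) (φ : QMat n) (hφ : φ ∈ CliffordLevel n 2) (P : QMat n)
    (hP : P ∈ PauliGroup n) : star φ * P * φ ∈ PauliGroup n := by
  have hinj : Set.InjOn (fun Q => φ * Q * star φ) (PauliGroup n) := by
    intro A _ B _ hAB
    have h1 : star φ * (φ * A * star φ) * φ = star φ * (φ * B * star φ) * φ := by
      simp only at hAB
      rw [hAB]
    have h2 : ∀ A : QMat n, star φ * (φ * A * star φ) * φ = A := by
      intro A
      calc star φ * (φ * A * star φ) * φ = (star φ * φ) * A * (star φ * φ) := by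
            simp only [mul_assoc]
        _ = A := by rw [star_mul_self' hφ.1, one_mul, mul_one]
    rwa [h2, h2] at h1
  have hmaps : Set.MapsTo (fun Q => φ * Q * star φ) (PauliGroup n) (PauliGroup n) :=
    fun Q hQ => hφ.2 Q hQ
  have hsurj : Set.SurjOn (fun Q => φ * Q * star φ) (PauliGroup n) (PauliGroup n) :=
    ((Set.Finite.injOn_iff_bijOn_of_mapsTo (pauli_finite n) hmaps).1 hinj).surjOn
  obtain ⟨Q, hQ, rfl⟩ := hsurj hP
  have : star φ * (φ * Q * star φ) * φ = (star φ * φ) * Q * (star φ * φ) := by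
    simp only [mul_assoc]
  simp only [this]
  rwa [star_mul_self' hφ.1, one_mul, mul_one]

theorem clifford_star (n : ℕ) (φ : QMat n) (hφ : φ ∈ CliffordLevel n 2) :
    star φ ∈ CliffordLevel n 2 := by
  refine ⟨Unitary.star_mem hφ.1, fun P hP => ?_⟩
  rw [star_star]
  exact clifford_star_conj n φ hφ P hP

theorem level_conj (n : ℕ) (φ : QMat n) (hφ : φ ∈ CliffordLevel n 2) (j : ℕ) :
    ∀ U ∈ CliffordLevel n (j + 1), φ * U * star φ ∈ CliffordLevel n (j + 1) := by
  induction j with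
  | zero => exact fun U hU => hφ.2 U hU
  | succ j ih =>
    intro U hU
    refine ⟨mul_mem (mul_mem hφ.1 hU.1) (Unitary.star_mem hφ.1), fun P hP => ?_⟩
    have h1 := ih _ (hU.2 _ (clifford_star_conj n φ hφ P hP))
    convert h1 using 1
    simp only [star_mul, star_star, mul_assoc]

theorem level_mul_right (n : ℕ) (φ : QMat n) (hφ : φ ∈ CliffordLevel n 2) (j : ℕ)
    (U : QMat n) (hU : U ∈ CliffordLevel n (j + 2)) : U * φ ∈ CliffordLevel n (j + 2) := by
  refine ⟨mul_mem hU.1 hφ.1, fun P hP => ?_⟩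
  have h1 := hU.2 _ (hφ.2 P hP)
  convert h1 using 1
  simp only [star_mul, mul_assoc]

theorem level_mul_left (n : ℕ) (φ : QMat n) (hφ : φ ∈ CliffordLevel n 2) (j : ℕ)
    (U : QMat n) (hU : U ∈ CliffordLevel n (j + 2)) : φ * U ∈ CliffordLevel n (j + 2) := by
  have h1 := level_mul_right n φ hφ j _ (level_conj n φ hφ (j + 1) U hU)
  rwa [mul_assoc, star_mul_self' hφ.1, mul_one] at h1

/-- Entrywise conjugate. -/
noncomputable def cj (n : ℕ) (U : QMat n) : QMat n := U.map star

theorem cj_mul (n : ℕ) (U V : QMat n) : cj n (U * V) = cj n U * cj n V := by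
  ext a b
  simp [cj, Matrix.mul_apply]

theorem cj_star (n : ℕ) (U : QMat n) : cj n (star U) = star (cj n U) := by
  ext a b
  simp [cj, Matrix.star_apply]

theorem cj_cj (n : ℕ) (U : QMat n) : cj n (cj n U) = U := by
  ext a b
  simp [cj]

theorem cj_unitary (n : ℕ) (U : QMat n) (hU : U ∈ Matrix.unitaryGroup (QV n) ℂ) :
    cj n U ∈ Matrix.unitaryGroup (QV n) ℂ := by
  rw [Matrix.mem_unitaryGroup_iff, ← cj_star, ← cj_mul, mul_star_self' hU]
  ext a b
  by_cases h : a = b <;> simp [cj, Matrix.one_apply, h]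

theorem cj_pauli (n : ℕ) (P : QMat n) (hP : P ∈ PauliGroup n) : cj n P ∈ PauliGroup n := by
  rw [mem_pauli] at hP ⊢
  obtain ⟨c, u, z, hc, rfl⟩ := hP
  refine ⟨star c, u, z, hc.star, ?_⟩
  ext a b
  simp only [cj, Matrix.map_apply, mono]
  split_ifs
  · rw [star_mul', chi_star]
  · simp

theorem cj_level (n j : ℕ) : ∀ U ∈ CliffordLevel n (j + 1), cj n U ∈ CliffordLevel n (j + 1) := by
  induction j with
  | zero => exact fun U hU => cj_pauli n U hU
  | succ j ih =>
    intro U hU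
    refine ⟨cj_unitary n U hU.1, fun P hP => ?_⟩
    have h1 := ih _ (hU.2 _ (cj_pauli n P hP))
    rwa [cj_mul, cj_mul, cj_cj, cj_star] at h1

theorem semi_star (n : ℕ) (U : QMat n) (hU : U ∈ CliffordLevel n 3) (hs : IsSemiClifford n U) :
    star U ∈ CliffordLevel n 3 := by
  obtain ⟨φ, d, ψ, hφ, hψ, hd, rfl⟩ := hs
  have h1 := level_mul_right n _ (clifford_star n ψ hψ) 1 _
    (level_mul_left n _ (clifford_star n φ hφ) 1 _ hU)
  have h2 : star φ * (φ * d * ψ) * star ψ = d := by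
    calc star φ * (φ * d * ψ) * star ψ = (star φ * φ) * d * (ψ * star ψ) := by
          simp only [mul_assoc]
      _ = d := by rw [star_mul_self' hφ.1, mul_star_self' hψ.1, one_mul, mul_one]
  rw [h2] at h1
  have h3 : star d = cj n d := by
    ext a b
    rw [Matrix.star_apply, cj, Matrix.map_apply]
    by_cases h : a = b
    · rw [h]
    · rw [hd a b h, hd b a (Ne.symm h)]
  have h4 := cj_level n 2 d h1
  rw [← h3] at h4
  have h5 := level_mul_right n _ (clifford_star n φ hφ) 1 _
    (level_mul_left n _ (clifford_star n ψ hψ) 1 _ h4)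
  rw [star_mul, star_mul, ← mul_assoc]
  exact h5

/-! ### Degree bound -/

/-- Iterated derivative. -/
def iterD (n : ℕ) : List (QV n) → (QV n → ZMod 2) → QV n → ZMod 2
  | [], q => q
  | s :: l, q => iterD n l (fun y => q (y + s) + q y)

theorem degree_bound (n : ℕ) (j : ℕ) : ∀ (u : QV n) (c : ℂ) (q : QV n → ZMod 2),
    mono n (Equiv.addRight u) (fun b => c * chi (q (b + u))) ∈ CliffordLevel n (j + 1) →
    ∀ l : List (QV n), l.length = j + 2 → ∀ v, iterD n l q v = 0 := by
  induction j with
  | zero =>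
    intro u c q hM l hl v
    have hM' : _ ∈ PauliGroup n := hM
    rw [mem_pauli] at hM'
    obtain ⟨d, w, z, hd, h⟩ := hM'
    have hd0 : d ≠ 0 := by
      intro h0
      have := hd.norm
      rw [h0] at this
      simp at this
    have h1 : ∀ x, d * chi (qdot n z x) = c * chi (q (x + u)) :=
      mono_inj_phase n _ _ _ _ h.symm (fun x => mul_ne_zero hd0 (chi_ne _))
    have h2 : ∀ x, q (x + u) = q u + qdot n z x := by
      intro x
      have h3 := h1 0
      rw [qdot_zero, chi_zero, zero_add, mul_one] at h3
      have hc0 : c ≠ 0 := by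
        rintro rfl
        rw [zero_mul] at h3
        exact hd0 h3
      have h4 := h1 x
      rw [h3, mul_assoc, ← chi_add] at h4
      exact (chi_inj _ _ (mul_left_cancel₀ hc0 h4)).symm
    have h5 : ∀ y, q y = q u + qdot n z (y + u) := by
      intro y
      rw [← h2, add_assoc, qv_add_self, add_zero]
    match l, hl with
    | [s, t], _ =>
      simp only [iterD]
      rw [h5 (v + t + s), h5 (v + t), h5 (v + s), h5 v]
      simp only [qdot_add]
      generalize qdot n z v = a1
      generalize qdot n z t = a2
      generalize qdot n z s = a3
      generalize qdot n z u = a4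
      generalize q u = a5
      revert a1 a2 a3 a4 a5
      decide
  | succ j ih =>
    intro u c q hM l hl v
    match l, hl with
    | s :: l, hl =>
      have hP : mono n (Equiv.addRight s) (fun b => 1 * chi (qdot n 0 b)) ∈ PauliGroup n := by
        rw [mem_pauli]
        exact ⟨1, s, 0, Or.inl rfl, rfl⟩
      have h1 := hM.2 _ hP
      rw [mono_conj] at h1
      rw [iterD]
      refine ih s (c * star c) _ ?_ l (by simpa using hl) v
      convert h1 using 1
      apply mono_congr
      · intro x
        simp only [Equiv.trans_apply, Equiv.addRight_symm, Equiv.coe_addRight]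
        abel
      · intro x
        have h0 : qdot n 0 (x + -u) = 0 := by simp [qdot]
        have h3 : x + -u + s + u = x + s := by abel
        have h4 : x + -u + u = x := by abel
        have h5 : x + s + s = x := by rw [add_assoc, qv_add_self, add_zero]
        simp only [Equiv.addRight_symm, Equiv.coe_addRight, h0, h3, h4, h5, chi_zero, star_mul',
          chi_star, chi_add]
        ring

/-! ### The main result -/

theorem uk_level3 (k : ℕ) : permGate (2 ^ k - 1) (ukEquiv k) ∈ CliffordLevel (2 ^ k - 1) 3 := by
  rw [perm_eq]
  refine ⟨mono_unitary _ _ _ (by simp), fun P hP => ?_⟩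
  obtain ⟨c, u, z, hc, rfl⟩ := (mem_pauli _ P).1 hP
  rw [mono_conj]
  simp only [one_mul, star_one, mul_one]
  set f := ukEquiv k with hf
  have hval : ∀ v, ((f.symm.trans (Equiv.addRight u)).trans f) v = v + f u + ukMul k v (f u) := by
    intro v
    simp only [Equiv.trans_apply, Equiv.coe_addRight]
    rw [hf, ukEquiv_add, Equiv.apply_symm_apply]
  have hinv : ∀ v, ((f.symm.trans (Equiv.addRight u)).trans f).symm v =
      v + f u + ukMul k v (f u) := by
    intro v
    rw [← hval, Equiv.symm_apply_eq]
    simp [add_assoc, qv_add_self]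
  refine mono_clifford _ _ (fun s => s + ukMul k s (f u)) ?_ ?_ c hc
    (fun v => qdot _ z (f.symm v)) ?_
  · intro x s
    rw [hval, hval, ukMul_add_left]
    abel
  · intro x y
    rw [hinv, hinv, hinv, hinv, ukMul_add_left, ukMul_zero_left]
    have h := qv_add_self _ (f u)
    linear_combination -h
  · intro s x y
    have key : ∀ x, qdot _ z (f.symm (x + s)) + qdot _ z (f.symm x) =
        qdot _ z (f.symm s) + qdot _ z (f.symm (ukMul k x s)) := by
      intro x
      rw [hf, ukG_add, qdot_add, qdot_add]
      have h := CharTwo.add_self_eq_zero (qdot _ z ((ukEquiv k).symm x))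
      linear_combination h
    simp only [key]
    rw [hf, ukG_mul_add, qdot_add, ukMul_zero_left, ukG_zero, qdot_zero]
    have h := CharTwo.add_self_eq_zero (qdot _ z ((ukEquiv k).symm s))
    linear_combination -h

theorem perm_inv (n : ℕ) (f : QV n ≃ QV n) : (permGate n f)⁻¹ = star (permGate n f) := by
  apply Matrix.inv_eq_right_inv
  apply mul_star_self'
  rw [perm_eq]
  exact mono_unitary _ _ _ (by simp)

theorem iterD_uk (k : ℕ) (m : Fin (2 ^ k - 1)) (l : List (QV (2 ^ k - 1))) :
    ∀ (a : QV (2 ^ k - 1)),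
    iterD _ l (fun y => (a + ukMul k a (ukF k y)) m) 0 =
      (l.foldl (fun a s => ukMul k a (ukF k s)) a) m := by
  induction l with
  | nil =>
    intro a
    simp [iterD, ukF_zero, ukMul_zero_right]
  | cons s l ih =>
    intro a
    rw [iterD, List.foldl_cons, ← ih]
    congr 1
    funext y
    rw [ukF_add, ← Pi.add_apply]
    refine congrFun (?_ : (_ : QV (2 ^ k - 1)) = _) m
    rw [ukMul_add_right, ukMul_add_right, ukMul_assoc, ukMul_comm k (ukF k y) (ukF k s)]
    have h1 := qv_add_self _ a
    have h2 := qv_add_self _ (ukMul k a (ukF k y))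
    linear_combination h1 + h2

theorem ukF_E (k x : ℕ) : ukF k (ukE k x) = ukE k x := by
  unfold ukE
  split_ifs
  · exact ukF_basis k _
  · exact ukF_zero k

theorem foldl_E (k j : ℕ) :
    ((List.range j).map (fun i => ukE k (2 ^ (i + 1)))).foldl
      (fun a s => ukMul k a (ukF k s)) (ukE k 1) = ukE k (2 ^ (j + 1) - 1) := by
  induction j with
  | zero => simp
  | succ j ih =>
    rw [List.range_succ, List.map_append, List.foldl_append, ih]
    simp only [List.map_cons, List.map_nil, List.foldl_cons, List.foldl_nil]
    have hp : 2 ≤ 2 ^ (j + 1) := by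
      rw [pow_succ]
      have := Nat.one_le_two_pow (n := j)
      omega
    rw [ukF_E, ukMul_E _ _ _ (by omega) (by omega), if_pos]
    · congr 1
      rw [pow_succ 2 (j + 1)]
      omega
    · rw [Nat.land_comm, Nat.and_two_pow_sub_one_eq_mod, Nat.mod_self]

theorem uk_star_not (k j : ℕ) (hj : j + 2 ≤ k) :
    star (permGate (2 ^ k - 1) (ukEquiv k)) ∉ CliffordLevel (2 ^ k - 1) (j + 2) := by
  intro h
  have hpk : 2 ^ (j + 2) ≤ 2 ^ k := Nat.pow_le_pow_right (by norm_num) hj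
  have hp1 : 4 ≤ 2 ^ (j + 2) := by
    rw [pow_add]
    have := Nat.one_le_two_pow (n := j)
    omega
  let m : Fin (2 ^ k - 1) := ⟨2 ^ (j + 2) - 2, by omega⟩
  have hP : mono (2 ^ k - 1) (Equiv.addRight 0) (fun b => 1 * chi (qdot _ (stdBasis _ m) b)) ∈
      PauliGroup (2 ^ k - 1) := by
    rw [mem_pauli]
    exact ⟨1, 0, _, Or.inl rfl, rfl⟩
  have h1 := h.2 _ hP
  rw [perm_eq, mono_star, mono_conj] at h1
  have h2 := degree_bound (2 ^ k - 1) j 0 1 (fun v => ukF k v m) (by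
    convert h1 using 1
    apply mono_congr
    · intro x
      simp
    · intro x
      simp [qdot_basis, ukEquiv])
    (ukE k 1 :: (List.range (j + 1)).map (fun i => ukE k (2 ^ (i + 1)))) (by simp) 0
  have h3 : iterD (2 ^ k - 1) (ukE k 1 :: (List.range (j + 1)).map (fun i => ukE k (2 ^ (i + 1))))
      (fun v => ukF k v m) 0 = ukE k (2 ^ (j + 2) - 1) m := by
    rw [iterD, ← foldl_E, ← iterD_uk]
    congr 1
    funext y
    rw [← Pi.add_apply, ukF_add, ukF_E, ukMul_comm k (ukF k y)]
    refine congrFun (?_ : (_ : QV (2 ^ k - 1)) = _) m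
    have h1 := qv_add_self _ (ukF k y)
    linear_combination h1
  rw [h3] at h2
  unfold ukE at h2
  rw [dif_pos (by omega)] at h2
  unfold stdBasis at h2
  rw [if_pos (by apply Fin.ext; simp only [m]; omega)] at h2
  exact one_ne_zero h2

/-- For every `k ≥ 3`, the permutation gate `U_k` on `n = 2ᵏ−1` qubits
lies in `𝒞₃`, but `U_k⁻¹ ∉ 𝒞ₖ`; consequently `U_k` is not semi-Clifford. -/
theorem stmt5 (k : ℕ) (hk : 3 ≤ k) :
    ∃ f : QV (2 ^ k - 1) ≃ QV (2 ^ k - 1),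
      dmPiSpec (2 ^ k - 1) (ukMul k) ⇑f ∧
      permGate (2 ^ k - 1) f ∈ CliffordLevel (2 ^ k - 1) 3 ∧
      (permGate (2 ^ k - 1) f)⁻¹ ∉ CliffordLevel (2 ^ k - 1) k ∧
      ¬ IsSemiClifford (2 ^ k - 1) (permGate (2 ^ k - 1) f) := by
  refine ⟨ukEquiv k, ukF_spec k, uk_level3 k, ?_, ?_⟩
  · rw [perm_inv]
    obtain ⟨j, rfl⟩ : ∃ j, k = j + 2 := ⟨k - 2, by omega⟩
    exact uk_star_not (j + 2) j le_rfl
  · intro hs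
    exact uk_star_not k 1 hk (semi_star _ _ (uk_level3 k) hs)
end
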